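/- Let the data buffer consist of N i.i.d. trajectories of length T from a stationary process {(S_t, A_t, R_t)}_{t≥0} that is exponentially β-mixing with rate ρ ∈ (0,1), i.e., β(k) ≤ ρ^k for all k. Suppose: (i) at each step a knockoff action Ã_t is drawn, conditionally on S_t and independently of everything else, so that conditionally on S_t the 2p coordinates of (A_t, Ã_t) are mutually independent with the j-th coordinate of Ã_t having the same conditional law as the j-th coordinate of A_t; (ii) the pair Y_t = (R_t, S_{t+1}) depends on (S_t, A_t, Ã_t) only through S_t and the nonnull coordinates A_{t,G}, where H0 = {1,…,p} \ G is the null index set. Split the NT transition tuples into K = k0 · log(NT) folds by assigning the tuple at time t to fold (t mod K), where k0 > −1/log ρ. On a fold D_k, let W = (W_1,…,W_p) be any measurable function of D_k satisfying the flip-sign property, let τ_α = min{τ ∈ {|W_j| : W_j ≠ 0} : #{j : W_j ≤ −τ} ≤ α · #{j : W_j ≥ τ}}, and let Ĝ_k = {j : W_j ≥ τ_α} (with Ĝ_k = ∅ if no such τ exists). Then there exists a constant c = −k0 · log ρ − 1 > 0 and a constant C, independent of N and T, such that the modified false discovery rate satisfies E[ |Ĝ_k ∩ H0| / (1/α + |Ĝ_k|)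 ] ≤ α + C · K^{−1} (NT)^{−c}. -/

import Mathlib

open MeasureTheory ProbabilityTheory

/-- The swapped pair `[a, ã]_swap(Ω)`: for `j ∈ Ω` the `j`-th coordinates of `a` and `ã`
are exchanged, all other coordinates are left unchanged. -/
def swapPair {p : ℕ} (Ωs : Finset (Fin p)) (a a' : Fin p → ℝ) :
    (Fin p → ℝ) × (Fin p → ℝ) :=
  (fun j => if j ∈ Ωs then a' j else a j, fun j => if j ∈ Ωs then a j else a' j)

/-- The candidate knockoff thresholds for statistics `w` at level `α`: the positive values
`τ ∈ {|w_j| : w_j ≠ 0}` satisfying `#{j : w_j ≤ −τ} ≤ α · #{j : w_j ≥ τ}`. -/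
noncomputable def knockoffThresholds {p : ℕ} (α : ℝ) (w : Fin p → ℝ) : Finset ℝ :=
  ((Finset.univ.filter fun j : Fin p => w j ≠ 0).image fun j => |w j|).filter
    fun τ => ((Finset.univ.filter fun j : Fin p => w j ≤ -τ).card : ℝ)
      ≤ α * ((Finset.univ.filter fun j : Fin p => τ ≤ w j).card : ℝ)

/-- The knockoff selection `Ĝ = {j : w_j ≥ τ_α}` where `τ_α` is the smallest candidate
threshold; `Ĝ = ∅` if no candidate threshold exists. -/
noncomputable def knockoffSelect {p : ℕ} (α : ℝ) (w : Fin p → ℝ) : Finset (Fin p) :=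
  if h : (knockoffThresholds α w).Nonempty then
    Finset.univ.filter fun j : Fin p => (knockoffThresholds α w).min' h ≤ w j
  else ∅

/-- The β-mixing (absolute regularity) coefficient between two sub-σ-algebras `MA`, `MB`
of a probability space `(Ω, P)`. -/
noncomputable def betaCoef {Ω : Type*} [MeasurableSpace Ω] (P : Measure Ω)
    (MA MB : MeasurableSpace Ω) : ℝ :=
  sSup {r : ℝ | ∃ (I J : ℕ) (A : Fin I → Set Ω) (B : Fin J → Set Ω),
    (∀ i, MeasurableSet[MA] (A i)) ∧ (∀ j, MeasurableSet[MB] (B j)) ∧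
    Pairwise (Function.onFun Disjoint A) ∧ Pairwise (Function.onFun Disjoint B) ∧
    (⋃ i, A i) = Set.univ ∧ (⋃ j, B j) = Set.univ ∧
    r = 2⁻¹ * ∑ i, ∑ j,
      |(P (A i ∩ B j)).toReal - (P (A i)).toReal * (P (B j)).toReal|}

/-- The β-mixing coefficient of a process `X` at time lag `k`:
`β(k) = sup_m β(σ(X_t : t ≤ m), σ(X_t : t ≥ m + k))`. -/
noncomputable def processBetaMix {Ω E : Type*} [MeasurableSpace Ω] [MeasurableSpace E]
    (P : Measure Ω) (X : ℕ → Ω → E) (k : ℕ) : ℝ :=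
  ⨆ m : ℕ, betaCoef P
    (⨆ t ∈ Set.Iic m, MeasurableSpace.comap (X t) inferInstance)
    (⨆ t ∈ Set.Ici (m + k), MeasurableSpace.comap (X t) inferInstance)

/-!
The flip-sign property says that negating `W_j` amounts to exchanging `A_j` and `Ã_j` in the data.
If the law of the data is invariant under these exchanges for every null `j`, then `W_j` may be
replaced by `-W_j` in the `j`-th term of the mFDR, one null at a time.  Whenever `j` is selected
after its own flip, the threshold does not depend on `j`, which bounds the sum of the flipped terms
by `α` pointwise.

A fold satisfies this invariance when its transitions are independent.  In general, the consecutive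
pairs `(X_t, X_{t+1})` of the process `X = (S, A, R)` along a fold are separated by gaps of length
`K - 1`, so decoupling them one at a time costs at most `β(K - 1)` in total variation per
transition.  The knockoff actions cost nothing, being produced from the states by a product kernel.
Summing over the fold gives an error of at most `N (T / K) ρ ^ (K - 1)`, and `ρ ^ K` is a power of
`NT` because `K = k0 log (NT)`.
-/

/-! ### Selection rule -/

section Selection

variable {p : ℕ} {α τ : ℝ} {w : Fin p → ℝ} {j : Fin p}

lemma mem_knockoffThresholds :
    τ ∈ knockoffThresholds α w ↔ (∃ i, w i ≠ 0 ∧ |w i| = τ) ∧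
      ((Finset.univ.filter fun i => w i ≤ -τ).card : ℝ)
        ≤ α * ((Finset.univ.filter fun i => τ ≤ w i).card : ℝ) := by
  simp [knockoffThresholds]

lemma pos_of_mem_knockoffThresholds (h : τ ∈ knockoffThresholds α w) : 0 < τ := by
  obtain ⟨⟨i, hi, rfl⟩, -⟩ := mem_knockoffThresholds.1 h
  exact abs_pos.2 hi

lemma knockoffSelect_eq_filter (h : IsLeast (knockoffThresholds α w : Set ℝ) τ) :
    knockoffSelect α w = Finset.univ.filter fun i => τ ≤ w i := by
  have hne : (knockoffThresholds α w).Nonempty := ⟨τ, h.1⟩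
  rw [knockoffSelect, dif_pos hne, (Finset.isLeast_min' _ hne).unique h]

lemma exists_isLeast_of_mem_knockoffSelect (h : j ∈ knockoffSelect α w) :
    ∃ τ, IsLeast (knockoffThresholds α w : Set ℝ) τ ∧ τ ≤ w j := by
  unfold knockoffSelect at h
  split_ifs at h with hne
  · exact ⟨_, Finset.isLeast_min' _ hne, (Finset.mem_filter.1 h).2⟩
  · simp at h

lemma mem_knockoffSelect : j ∈ knockoffSelect α w ↔ ∃ τ ∈ knockoffThresholds α w, τ ≤ w j := by
  refine ⟨fun h => ?_, fun ⟨τ, hτ, hj⟩ => ?_⟩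
  · obtain ⟨τ, hτ, hj⟩ := exists_isLeast_of_mem_knockoffSelect h
    exact ⟨τ, hτ.1, hj⟩
  · have hne : (knockoffThresholds α w).Nonempty := ⟨τ, hτ⟩
    rw [knockoffSelect_eq_filter (Finset.isLeast_min' _ hne), Finset.mem_filter]
    exact ⟨Finset.mem_univ j, (Finset.min'_le _ τ hτ).trans hj⟩

lemma measurableSet_abs_mem_knockoffThresholds (α : ℝ) (i : Fin p) :
    MeasurableSet {w : Fin p → ℝ | |w i| ∈ knockoffThresholds α w} := by
  simp only [mem_knockoffThresholds, Finset.card_filter, Nat.cast_sum, Nat.cast_ite, Nat.cast_one,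
    Nat.cast_zero, Set.ofPred_and, Set.ofPred_exists]
  refine MeasurableSet.inter ?_ (measurableSet_le ?_ ?_)
  · refine MeasurableSet.iUnion fun k => MeasurableSet.inter ?_ ?_
    · exact (measurableSet_eq_fun (measurable_pi_apply k) measurable_const).compl
    · exact measurableSet_eq_fun (measurable_pi_apply k).abs (measurable_pi_apply i).abs
  · exact Finset.measurable_sum _ fun k _ => Measurable.ite
      (measurableSet_le (measurable_pi_apply k) (measurable_pi_apply i).abs.neg)
      measurable_const measurable_const
  · exact (Finset.measurable_sum _ fun k _ => Measurable.ite
      (measurableSet_le (measurable_pi_apply i).abs (measurable_pi_apply k))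
      measurable_const measurable_const).const_mul α

lemma measurableSet_mem_knockoffSelect (α : ℝ) (j : Fin p) :
    MeasurableSet {w : Fin p → ℝ | j ∈ knockoffSelect α w} := by
  have : {w : Fin p → ℝ | j ∈ knockoffSelect α w}
      = ⋃ i, {w | |w i| ∈ knockoffThresholds α w} ∩ {w | |w i| ≤ w j} := by
    ext w
    simp only [Set.mem_ofPred_eq, mem_knockoffSelect, Set.mem_iUnion, Set.mem_inter_iff]
    constructor
    · rintro ⟨τ, hτ, hj⟩
      obtain ⟨⟨i, -, rfl⟩, -⟩ := mem_knockoffThresholds.1 hτ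
      exact ⟨i, hτ, hj⟩
    · rintro ⟨i, hτ, hj⟩
      exact ⟨|w i|, hτ, hj⟩
  rw [this]
  exact MeasurableSet.iUnion fun i => (measurableSet_abs_mem_knockoffThresholds α i).inter
    (measurableSet_le (measurable_pi_apply i).abs (measurable_pi_apply j))

lemma measurable_knockoffSelect (α : ℝ) : Measurable[_, ⊤] (knockoffSelect (p := p) α) := by
  refine @measurable_to_countable' _ _ ⊤ _ _ _ fun s => ?_
  have : knockoffSelect α ⁻¹' {s} = ⋂ j, {w : Fin p → ℝ | j ∈ knockoffSelect α w ↔ j ∈ s} := by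
    ext w
    simp only [Set.mem_preimage, Set.mem_singleton_iff, Finset.ext_iff, Set.mem_iInter,
      Set.mem_ofPred_eq]
  rw [this]
  refine MeasurableSet.iInter fun j => ?_
  by_cases hj : j ∈ s
  · simpa only [hj, iff_true] using measurableSet_mem_knockoffSelect α j
  · simpa only [hj, iff_false, Set.compl_ofPred] using
      (measurableSet_mem_knockoffSelect α j).compl

lemma measurable_comp_knockoffSelect {β : Type*} [MeasurableSpace β] (α : ℝ)
    (F : Finset (Fin p) → β) : Measurable fun w : Fin p → ℝ => F (knockoffSelect α w) :=
  (@measurable_from_top _ _ _ F).comp (measurable_knockoffSelect α)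

lemma integrable_comp_knockoffSelect {D : Type*} [MeasurableSpace D] {Q : Measure D}
    [IsFiniteMeasure Q] {W : D → Fin p → ℝ} (hW : Measurable W) (α : ℝ)
    (F : Finset (Fin p) → ℝ) : Integrable (fun d => F (knockoffSelect α (W d))) Q := by
  let _ : MeasurableSpace (Finset (Fin p)) := ⊤
  exact (Integrable.of_finite (f := F)).comp_measurable ((measurable_knockoffSelect α).comp hW)

/-! ### Flipping the sign of one statistic -/

lemma filter_update_neg_le_neg (hτ : 0 < τ) (hj : w j ≤ -τ) :
    (Finset.univ.filter fun i => Function.update w j (-w j) i ≤ -τ)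
      = (Finset.univ.filter fun i => w i ≤ -τ).erase j := by
  ext i
  rcases eq_or_ne i j with rfl | hij
  · have : ¬-w i ≤ -τ := by linarith
    simp [this]
  · simp [hij]

lemma filter_le_update_neg (hj : w j ≤ -τ) :
    (Finset.univ.filter fun i => τ ≤ Function.update w j (-w j) i)
      = insert j (Finset.univ.filter fun i => τ ≤ w i) := by
  ext i
  rcases eq_or_ne i j with rfl | hij
  · have : τ ≤ -w i := by linarith
    simp [this]
  · simp [hij]

-- The right-hand side does not involve `j`: the threshold condition at `τ` is the same
-- whichever of the coordinates `w j ≤ -τ` is flipped.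
lemma mem_knockoffThresholds_update_neg (hτ : 0 < τ) (hj : w j ≤ -τ) :
    τ ∈ knockoffThresholds α (Function.update w j (-w j)) ↔ (∃ i, w i ≠ 0 ∧ |w i| = τ) ∧
      ((Finset.univ.filter fun i => w i ≤ -τ).card : ℝ) - 1
        ≤ α * ((Finset.univ.filter fun i => τ ≤ w i).card + 1) := by
  have habs : ∀ i, |Function.update w j (-w j) i| = |w i| := fun i => by
    rcases eq_or_ne i j with rfl | hij <;> simp [*]
  have hmem : j ∈ Finset.univ.filter fun i => w i ≤ -τ := by simpa using hj
  have hnmem : j ∉ Finset.univ.filter fun i => τ ≤ w i := by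
    simpa using (by linarith : w j < τ)
  rw [mem_knockoffThresholds, filter_update_neg_le_neg hτ hj, filter_le_update_neg hj,
    Finset.card_insert_of_notMem hnmem, Finset.cast_card_erase_of_mem hmem]
  simp only [← abs_pos, habs, Nat.cast_add, Nat.cast_one]

lemma isLeast_knockoffThresholds_update_neg_unique {σ : ℝ} {k : Fin p}
    (hτ : IsLeast (knockoffThresholds α (Function.update w j (-w j)) : Set ℝ) τ)
    (hj : w j ≤ -τ)
    (hσ : IsLeast (knockoffThresholds α (Function.update w k (-w k)) : Set ℝ) σ)
    (hk : w k ≤ -σ) : τ = σ := by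
  wlog h : τ ≤ σ generalizing j k τ σ
  · exact (this hσ hk hτ hj (le_of_not_ge h)).symm
  have hτ0 : 0 < τ := pos_of_mem_knockoffThresholds hτ.1
  refine h.antisymm (hσ.2 ?_)
  have := (mem_knockoffThresholds_update_neg hτ0 hj).1 hτ.1
  exact (mem_knockoffThresholds_update_neg hτ0 (by linarith)).2 this

lemma exists_isLeast_of_forall_mem_knockoffSelect_update_neg {J : Finset (Fin p)}
    (hne : J.Nonempty) (hJ : ∀ j ∈ J, j ∈ knockoffSelect α (Function.update w j (-w j))) :
    ∃ τ, ∀ j ∈ J,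
      IsLeast (knockoffThresholds α (Function.update w j (-w j)) : Set ℝ) τ ∧ w j ≤ -τ := by
  have hex : ∀ j ∈ J, ∃ τ,
      IsLeast (knockoffThresholds α (Function.update w j (-w j)) : Set ℝ) τ ∧ w j ≤ -τ := by
    intro j hj
    obtain ⟨τ, hτ, h⟩ := exists_isLeast_of_mem_knockoffSelect (hJ j hj)
    rw [Function.update_self] at h
    exact ⟨τ, hτ, le_neg_of_le_neg h⟩
  obtain ⟨j₀, hj₀⟩ := hne
  obtain ⟨τ, hτ, hw⟩ := hex j₀ hj₀
  refine ⟨τ, fun j hj => ?_⟩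
  obtain ⟨σ, hσ, hwσ⟩ := hex j hj
  rw [isLeast_knockoffThresholds_update_neg_unique hτ hw hσ hwσ]
  exact ⟨hσ, hwσ⟩

lemma card_le_of_forall_mem_knockoffSelect_update_neg {J : Finset (Fin p)}
    (hJ : ∀ j ∈ J, j ∈ knockoffSelect α (Function.update w j (-w j))) (hj : j ∈ J) :
    (J.card : ℝ) ≤ α * (knockoffSelect α (Function.update w j (-w j))).card + 1 := by
  obtain ⟨τ, hτ⟩ := exists_isLeast_of_forall_mem_knockoffSelect_update_neg ⟨j, hj⟩ hJ
  obtain ⟨hleast, hw⟩ := hτ j hj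
  have hτ0 : 0 < τ := pos_of_mem_knockoffThresholds hleast.1
  have hsub : J.erase j ⊆
      Finset.univ.filter fun i => Function.update w j (-w j) i ≤ -τ := by
    rw [filter_update_neg_le_neg hτ0 hw]
    exact Finset.erase_subset_erase _ fun i hi => by simpa using (hτ i hi).2
  have hcard : ((J.erase j).card : ℝ) ≤ _ := Nat.cast_le.2 (Finset.card_le_card hsub)
  rw [Finset.cast_card_erase_of_mem hj] at hcard
  have hthr := (mem_knockoffThresholds.1 hleast.1).2
  rw [knockoffSelect_eq_filter hleast]
  linarith

/-- The modified false discovery proportion of the selection `s` when the null set is `H`. -/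
noncomputable def mFDP (α : ℝ) (H s : Finset (Fin p)) : ℝ :=
  ((s ∩ H).card : ℝ) / (1 / α + (s.card : ℝ))

lemma mFDP_nonneg (hα : 0 < α) (H s : Finset (Fin p)) : 0 ≤ mFDP α H s := by
  unfold mFDP; positivity

lemma mFDP_le_one (hα : 0 < α) (H s : Finset (Fin p)) : mFDP α H s ≤ 1 := by
  refine div_le_one_of_le₀ ?_ (by positivity)
  calc ((s ∩ H).card : ℝ) ≤ s.card := mod_cast Finset.card_le_card Finset.inter_subset_left
    _ ≤ 1 / α + s.card := le_add_of_nonneg_left (by positivity)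

lemma mFDP_eq_sum (α : ℝ) (H s : Finset (Fin p)) :
    mFDP α H s = ∑ j ∈ H, if j ∈ s then 1 / (1 / α + (s.card : ℝ)) else 0 := by
  rw [mFDP, ← Finset.sum_filter, Finset.filter_mem_eq_inter, Finset.inter_comm,
    Finset.sum_const, nsmul_eq_mul, mul_one_div]

lemma sum_knockoffSelect_update_neg_le (hα : 0 < α) (H : Finset (Fin p)) (w : Fin p → ℝ) :
    ∑ j ∈ H, (if j ∈ knockoffSelect α (Function.update w j (-w j))
      then 1 / (1 / α + ((knockoffSelect α (Function.update w j (-w j))).card : ℝ)) else 0)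
      ≤ α := by
  rw [← Finset.sum_filter]
  set J := H.filter fun j => j ∈ knockoffSelect α (Function.update w j (-w j))
  rcases J.eq_empty_or_nonempty with h0 | h0
  · simpa [h0] using hα.le
  have hJ : (0 : ℝ) < J.card := mod_cast h0.card_pos
  have hterm : ∀ j ∈ J,
      1 / (1 / α + ((knockoffSelect α (Function.update w j (-w j))).card : ℝ)) ≤ α / J.card := by
    intro j hj
    have := card_le_of_forall_mem_knockoffSelect_update_neg
      (fun i hi => (Finset.mem_filter.1 hi).2) hj
    rw [div_le_div_iff₀ (by positivity) hJ, mul_add, mul_one_div_cancel hα.ne']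
    linarith
  calc _ ≤ ∑ _ ∈ J, α / J.card := Finset.sum_le_sum hterm
    _ = α := by rw [Finset.sum_const, nsmul_eq_mul, mul_div_cancel₀ _ hJ.ne']

theorem integral_mFDP_knockoffSelect_le {D : Type*} [MeasurableSpace D] {Q : Measure D}
    [IsProbabilityMeasure Q] (hα : 0 < α) {H : Finset (Fin p)} {W : D → Fin p → ℝ}
    (hW : Measurable W) {σ : Fin p → D → D} (hσ : ∀ j ∈ H, MeasurePreserving (σ j) Q Q)
    (hflip : ∀ j ∈ H, ∀ d, W (σ j d) = Function.update (W d) j (-W d j)) :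
    ∫ d, mFDP α H (knockoffSelect α (W d)) ∂Q ≤ α := by
  set c : Fin p → Finset (Fin p) → ℝ := fun j s =>
    if j ∈ s then 1 / (1 / α + (s.card : ℝ)) else 0
  have hint : ∀ j ∈ H, Integrable
      (fun d => c j (knockoffSelect α (Function.update (W d) j (-W d j)))) Q := by
    intro j hj
    simpa only [Function.comp_apply, hflip j hj] using
      integrable_comp_knockoffSelect (Q := Q) (hW.comp (hσ j hj).measurable) α (c j)
  have hswap : ∀ j ∈ H, ∫ d, c j (knockoffSelect α (W d)) ∂Q
      = ∫ d, c j (knockoffSelect α (Function.update (W d) j (-W d j))) ∂Q := by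
    intro j hj
    simp only [← hflip j hj]
    rw [← integral_map (hσ j hj).measurable.aemeasurable
      (f := fun d => c j (knockoffSelect α (W d)))
      ((measurable_comp_knockoffSelect α (c j)).comp hW).aestronglyMeasurable,
      (hσ j hj).map_eq]
  calc ∫ d, mFDP α H (knockoffSelect α (W d)) ∂Q
      = ∑ j ∈ H, ∫ d, c j (knockoffSelect α (W d)) ∂Q := by
        simp only [mFDP_eq_sum]
        exact integral_finsetSum H fun j _ => integrable_comp_knockoffSelect (Q := Q) hW α (c j)
    _ = ∫ d, ∑ j ∈ H, c j (knockoffSelect α (Function.update (W d) j (-W d j))) ∂Q := by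
        rw [Finset.sum_congr rfl hswap, ← integral_finsetSum _ hint]
    _ ≤ ∫ _, α ∂Q := integral_mono (integrable_finsetSum _ hint) (integrable_const _)
        fun d => sum_knockoffSelect_update_neg_le hα H (W d)
    _ = α := by simp

end Selection

/-! ### Total variation -/

/-- `μ` exceeds `ν` by at most `δ` on every measurable set.  For probability measures this says
that the total variation distance of `μ` and `ν` is at most `δ`. -/
def TVLe {E : Type*} [MeasurableSpace E] (μ ν : Measure E) (δ : ENNReal) : Prop :=
  ∀ s, MeasurableSet s → μ s ≤ ν s + δ

lemma coe_piFinSuccAbove_last {E : Type*} [MeasurableSpace E] (n : ℕ) :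
    ⇑(MeasurableEquiv.piFinSuccAbove (fun _ : Fin (n + 1) => E) (Fin.last n))
      = fun x => (x (Fin.last n), fun i : Fin n => x i.castSucc) := by
  ext x : 1
  simp [MeasurableEquiv.piFinSuccAbove, Fin.init_def]

namespace TVLe

variable {E F : Type*} [MeasurableSpace E] [MeasurableSpace F] {μ ν η : Measure E}
  {δ δ' : ENNReal}

lemma map (h : TVLe μ ν δ) {g : E → F} (hg : Measurable g) :
    TVLe (μ.map g) (ν.map g) δ := fun s hs => by
  simpa only [Measure.map_apply hg hs] using h _ (hg hs)

lemma of_map_equiv (e : E ≃ᵐ F) (h : TVLe (μ.map e) (ν.map e) δ) : TVLe μ ν δ := by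
  simpa [Measure.map_map e.symm.measurable e.measurable] using h.map e.symm.measurable

lemma mono (h : TVLe μ ν δ) (hδ : δ ≤ δ') : TVLe μ ν δ' := fun s hs =>
  (h s hs).trans (by gcongr)

lemma trans (h : TVLe μ ν δ) (h' : TVLe ν η δ') : TVLe μ η (δ + δ') := fun s hs =>
  calc μ s ≤ ν s + δ := h s hs
    _ ≤ η s + δ' + δ := by gcongr; exact h' s hs
    _ = η s + (δ + δ') := by rw [add_assoc, add_comm δ']

lemma lintegral_le (h : TVLe μ ν δ) {f : E → ENNReal} (hf : Measurable f) (hf1 : ∀ x, f x ≤ 1) :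
    ∫⁻ x, f x ∂μ ≤ ∫⁻ x, f x ∂ν + δ := by
  have layer_cake (η : Measure E) :
      ∫⁻ x, f x ∂η = ∫⁻ t in Set.Ioi (0 : ℝ), η {x | t < (f x).toReal} := by
    rw [← lintegral_eq_lintegral_meas_lt η (.of_forall fun x => ENNReal.toReal_nonneg)
      hf.ennreal_toReal.aemeasurable]
    exact lintegral_congr fun x =>
      (ENNReal.ofReal_toReal (ne_top_of_le_ne_top ENNReal.one_ne_top (hf1 x))).symm
  have hlevel (t : ℝ) : t ∈ Set.Ioi (0 : ℝ) → μ {x | t < (f x).toReal}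
      ≤ ν {x | t < (f x).toReal} + (Set.Iio 1).indicator (fun _ => δ) t := by
    intro _
    rcases lt_or_ge t 1 with h1 | h1
    · rw [Set.indicator_of_mem (Set.mem_Iio.2 h1)]
      exact h _ (measurableSet_lt measurable_const hf.ennreal_toReal)
    · have hempty : {x | t < (f x).toReal} = ∅ := Set.eq_empty_of_forall_notMem fun x hx =>
        (h1.trans_lt hx).not_ge (ENNReal.toReal_mono ENNReal.one_ne_top (hf1 x))
      simp [hempty]
  calc ∫⁻ x, f x ∂μ = ∫⁻ t in Set.Ioi (0 : ℝ), μ {x | t < (f x).toReal} := layer_cake μ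
    _ ≤ ∫⁻ t in Set.Ioi (0 : ℝ),
        (ν {x | t < (f x).toReal} + (Set.Iio 1).indicator (fun _ => δ) t) :=
      setLIntegral_mono' measurableSet_Ioi hlevel
    _ = ∫⁻ x, f x ∂ν + δ := by
      rw [lintegral_add_right _ (measurable_const.indicator measurableSet_Iio), ← layer_cake ν,
        lintegral_indicator measurableSet_Iio, Measure.restrict_restrict measurableSet_Iio]
      simp [Set.Iio_inter_Ioi]

lemma integral_le [IsFiniteMeasure μ] [IsFiniteMeasure ν] {δ : ℝ} (hδ : 0 ≤ δ)
    (h : TVLe μ ν (ENNReal.ofReal δ)) {f : E → ℝ} (hf : Measurable f) (h0 : ∀ x, 0 ≤ f x)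
    (h1 : ∀ x, f x ≤ 1) : ∫ x, f x ∂μ ≤ ∫ x, f x ∂ν + δ := by
  have hint (η : Measure E) [IsFiniteMeasure η] : Integrable f η :=
    .of_bound hf.aestronglyMeasurable 1 (.of_forall fun x => by
      rw [Real.norm_of_nonneg (h0 x)]; exact h1 x)
  have hle := h.lintegral_le hf.ennreal_ofReal fun x => ENNReal.ofReal_le_one.2 (h1 x)
  rwa [← ofReal_integral_eq_lintegral_ofReal (hint μ) (.of_forall h0),
    ← ofReal_integral_eq_lintegral_ofReal (hint ν) (.of_forall h0),
    ← ENNReal.ofReal_add (integral_nonneg h0) hδ,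
    ENNReal.ofReal_le_ofReal_iff (add_nonneg (integral_nonneg h0) hδ)] at hle

lemma compProd [SFinite μ] [SFinite ν] (h : TVLe μ ν δ) (κ : Kernel E F) [IsMarkovKernel κ] :
    TVLe (μ ⊗ₘ κ) (ν ⊗ₘ κ) δ := fun s hs => by
  rw [Measure.compProd_apply hs, Measure.compProd_apply hs]
  exact h.lintegral_le (Kernel.measurable_kernel_prodMk_left hs) fun x => prob_le_one

lemma prod_left [SFinite μ] [SFinite ν] (h : TVLe μ ν δ) (η : Measure F)
    [IsProbabilityMeasure η] : TVLe (μ.prod η) (ν.prod η) δ := by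
  simpa only [Measure.compProd_const] using h.compProd (Kernel.const E η)

lemma prod_right [SFinite μ] [SFinite ν] (h : TVLe μ ν δ) (η : Measure F)
    [IsProbabilityMeasure η] : TVLe (η.prod μ) (η.prod ν) δ := by
  simpa only [Measure.prod_swap] using (h.prod_left η).map measurable_swap

lemma of_eq (h : μ = ν) : TVLe μ ν δ := fun s _ => by simp [h]

lemma pi_succ {n : ℕ} {μ : Measure (Fin (n + 1) → E)} {Q : Fin (n + 1) → Measure E}
    [∀ i, SigmaFinite (Q i)]
    (h : TVLe (μ.map fun x => (x (Fin.last n), fun i : Fin n => x i.castSucc))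
      ((Q (Fin.last n)).prod (Measure.pi fun i : Fin n => Q i.castSucc)) δ) :
    TVLe μ (Measure.pi Q) δ := by
  refine of_map_equiv (.piFinSuccAbove (fun _ => E) (Fin.last n)) ?_
  rw [(measurePreserving_piFinSuccAbove Q (Fin.last n)).map_eq, coe_piFinSuccAbove_last]
  simpa only [Fin.succAbove_last] using h

lemma pi_const [IsProbabilityMeasure μ] [IsProbabilityMeasure ν] (h : TVLe μ ν δ) (n : ℕ) :
    TVLe (Measure.pi fun _ : Fin n => μ) (Measure.pi fun _ : Fin n => ν) (n * δ) := by
  induction n with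
  | zero => exact of_eq (by rw [Measure.pi_of_empty, Measure.pi_of_empty])
  | succ n ih =>
    refine pi_succ ?_
    rw [← coe_piFinSuccAbove_last,
      (measurePreserving_piFinSuccAbove (fun _ => μ) (Fin.last n)).map_eq, Nat.cast_succ,
      add_one_mul, add_comm (n * δ)]
    exact (h.prod_left _).trans (ih.prod_right ν)

/-- Telescoping: the laws are decoupled one coordinate at a time. -/
lemma pi_of_forall_succ {Ω : Type*} [MeasurableSpace Ω] {P : Measure Ω} [IsProbabilityMeasure P]
    {x : ℕ → Ω → E} (hx : ∀ i, Measurable (x i))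
    (h : ∀ m, TVLe (P.map fun ω => (x (m + 1) ω, fun i : Fin (m + 1) => x i ω))
      ((P.map (x (m + 1))).prod (P.map fun ω (i : Fin (m + 1)) => x i ω)) δ) (n : ℕ) :
    TVLe (P.map fun ω (i : Fin (n + 1)) => x i ω)
      (Measure.pi fun i : Fin (n + 1) => P.map (x i)) (n * δ) := by
  have (i : ℕ) : IsProbabilityMeasure (P.map (x i)) :=
    Measure.isProbabilityMeasure_map (hx i).aemeasurable
  induction n with
  | zero =>
    refine of_eq (Measure.pi_eq fun s hs => ?_).symm
    rw [Measure.map_apply (by fun_prop) (.univ_pi hs)]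
    simp [Measure.map_apply (hx 0) (hs 0), Set.preimage, Set.mem_pi]
  | succ n ih =>
    have : IsProbabilityMeasure (P.map fun ω (i : Fin (n + 1)) => x i ω) :=
      Measure.isProbabilityMeasure_map (by fun_prop)
    refine pi_succ ?_
    rw [Measure.map_map (by fun_prop) (by fun_prop), Nat.cast_succ, add_one_mul,
      add_comm (n * δ)]
    exact (h n).trans (ih.prod_right (P.map (x (n + 1))))

end TVLe

/-! ### Total variation from absolute regularity -/

lemma TVLe.of_fintype {Z : Type*} [Fintype Z] [MeasurableSpace Z] [MeasurableSingletonClass Z]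
    (μ ν : Measure Z) [IsProbabilityMeasure μ] [IsProbabilityMeasure ν] :
    TVLe μ ν (ENNReal.ofReal (2⁻¹ * ∑ z, |μ.real {z} - ν.real {z}|)) := by
  classical
  intro s _
  set q : Z → ℝ := fun z => μ.real {z} - ν.real {z} with hq
  have hsum (D : Finset Z) : ∑ z ∈ D, q z = μ.real D - ν.real D := by
    simp only [hq, Finset.sum_sub_distrib, sum_measureReal_singleton]
  -- the positive parts of `q` sum to half of `∑ |q|`, because `∑ q = 0`
  have hpos : ∑ z ∈ s.toFinset, q z ≤ ∑ z, (|q z| + q z) / 2 :=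
    (Finset.sum_le_sum fun z _ => by linarith [le_abs_self (q z)]).trans
      (Finset.sum_le_sum_of_subset_of_nonneg (Finset.subset_univ _)
        fun z _ _ => by linarith [neg_abs_le (q z)])
  have htotal : ∑ z, q z = 0 := by simp [hsum]
  rw [← Finset.sum_div, Finset.sum_add_distrib, htotal, hsum, Set.coe_toFinset] at hpos
  rw [← ENNReal.ofReal_toReal (measure_ne_top μ s), ← ENNReal.ofReal_toReal (measure_ne_top ν s),
    ← ENNReal.ofReal_add ENNReal.toReal_nonneg (by positivity)]
  refine ENNReal.ofReal_le_ofReal ?_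
  change μ.real s ≤ ν.real s + 2⁻¹ * ∑ z, |q z|
  linarith

lemma TVLe.of_generateFrom {E : Type*} [mE : MeasurableSpace E] {μ ν : Measure E}
    [IsFiniteMeasure μ] [IsFiniteMeasure ν] {δ : ENNReal} {C : Set (Set E)}
    (hC : IsSetAlgebra C) (hgen : mE = MeasurableSpace.generateFrom C)
    (h : ∀ t ∈ C, μ t ≤ ν t + δ) : TVLe μ ν δ := by
  intro s hs
  refine ENNReal.le_of_forall_pos_le_add fun ε hε _ => ?_
  obtain ⟨t, ht, hts⟩ := exists_measure_symmDiff_lt_of_generateFrom_isSetRing (μ := μ + ν)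
    hC.isSetRing ⟨{Set.univ}, Set.countable_singleton _, by simpa using hC.univ_mem, by simp⟩
    hgen hs (ε := ε) (by simpa using hε)
  calc μ s ≤ μ t + μ (symmDiff t s) := by
        refine (measure_mono fun z hz => ?_).trans (measure_union_le t (symmDiff t s))
        by_cases hzt : z ∈ t
        exacts [.inl hzt, .inr (.inr ⟨hz, hzt⟩)]
    _ ≤ ν t + δ + μ (symmDiff t s) := by gcongr; exact h t ht
    _ ≤ ν s + ν (symmDiff t s) + δ + μ (symmDiff t s) := by
        gcongr
        refine (measure_mono fun z hz => ?_).trans (measure_union_le s (symmDiff t s))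
        by_cases hzs : z ∈ s
        exacts [.inl hzs, .inr (.inl ⟨hz, hzs⟩)]
    _ = ν s + δ + (μ + ν) (symmDiff t s) := by rw [Measure.add_apply]; ring
    _ ≤ ν s + δ + ε := by gcongr

/-- The sets that are a union of cells of a finite measurable grid on `X × Y`. -/
def gridSets (X Y : Type*) [MeasurableSpace X] [MeasurableSpace Y] : Set (Set (X × Y)) :=
  {s | ∃ (I J : ℕ) (f : X → Fin I) (g : Y → Fin J) (D : Set (Fin I × Fin J)),
    Measurable f ∧ Measurable g ∧ Prod.map f g ⁻¹' D = s}

section Grid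

variable {X Y : Type*} [MeasurableSpace X] [MeasurableSpace Y]

lemma preimage_mem_gridSets {U V : Type*} [Finite U] [Finite V] [MeasurableSpace U]
    [MeasurableSpace V] [DiscreteMeasurableSpace U] [DiscreteMeasurableSpace V]
    {f : X → U} {g : Y → V} (hf : Measurable f) (hg : Measurable g) (D : Set (U × V)) :
    Prod.map f g ⁻¹' D ∈ gridSets X Y := by
  let eU := Finite.equivFin U
  let eV := Finite.equivFin V
  refine ⟨_, _, eU ∘ f, eV ∘ g, Prod.map eU.symm eV.symm ⁻¹' D, (by fun_prop), (by fun_prop), ?_⟩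
  ext z
  simp [Prod.map]

lemma isSetAlgebra_gridSets : IsSetAlgebra (gridSets X Y) where
  empty_mem := preimage_mem_gridSets (measurable_const (a := ())) (measurable_const (a := ())) ∅
  compl_mem := by
    rintro _ ⟨I, J, f, g, D, hf, hg, rfl⟩
    exact preimage_mem_gridSets hf hg Dᶜ
  union_mem := by
    rintro _ _ ⟨I, J, f, g, D, hf, hg, rfl⟩ ⟨I', J', f', g', D', hf', hg', rfl⟩
    exact preimage_mem_gridSets (hf.prodMk hf') (hg.prodMk hg')
      {z | (z.1.1, z.2.1) ∈ D ∨ (z.1.2, z.2.2) ∈ D'}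

lemma generateFrom_gridSets :
    (inferInstance : MeasurableSpace (X × Y)) = MeasurableSpace.generateFrom (gridSets X Y) := by
  refine le_antisymm ?_ (MeasurableSpace.generateFrom_le ?_)
  · rw [← generateFrom_prod]
    refine MeasurableSpace.generateFrom_mono ?_
    rintro _ ⟨s, hs, t, ht, rfl⟩
    convert preimage_mem_gridSets (measurable_mem.2 hs) (measurable_mem.2 ht) {(True, True)}
      using 1
    ext z
    simp [Set.mem_prod, Prod.map]
  · rintro _ ⟨I, J, f, g, D, hf, hg, rfl⟩
    exact (hf.prodMap hg) D.toFinite.measurableSet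

lemma TVLe.of_grid {μ ν : Measure (X × Y)} [IsFiniteMeasure μ] [IsFiniteMeasure ν] {δ : ENNReal}
    (h : ∀ (I J : ℕ) (f : X → Fin I) (g : Y → Fin J), Measurable f → Measurable g →
      TVLe (μ.map (Prod.map f g)) (ν.map (Prod.map f g)) δ) : TVLe μ ν δ := by
  refine .of_generateFrom isSetAlgebra_gridSets generateFrom_gridSets ?_
  rintro _ ⟨I, J, f, g, D, hf, hg, rfl⟩
  have hD : MeasurableSet D := D.toFinite.measurableSet
  simpa only [Measure.map_apply (hf.prodMap hg) hD] using h I J f g hf hg D hD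

end Grid

section BetaMixing

variable {Ω X Y : Type*} {MA MB : MeasurableSpace Ω} [mΩ : MeasurableSpace Ω]
  [MeasurableSpace X] [MeasurableSpace Y] {P : Measure Ω} [IsProbabilityMeasure P]

lemma half_sum_abs_sub_le_one {I J : ℕ} {A : Fin I → Set Ω} {B : Fin J → Set Ω}
    (hA : ∀ i, MeasurableSet (A i)) (hB : ∀ j, MeasurableSet (B j))
    (dA : Pairwise (Function.onFun Disjoint A)) (dB : Pairwise (Function.onFun Disjoint B))
    (uA : (⋃ i, A i) = Set.univ) (uB : (⋃ j, B j) = Set.univ) :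
    2⁻¹ * ∑ i, ∑ j, |P.real (A i ∩ B j) - P.real (A i) * P.real (B j)| ≤ 1 := by
  have sum_A : ∑ i, P.real (A i) = 1 := by rw [← measureReal_iUnion_fintype dA hA, uA]; simp
  have sum_B : ∑ j, P.real (B j) = 1 := by rw [← measureReal_iUnion_fintype dB hB, uB]; simp
  have sum_inter (i) : ∑ j, P.real (A i ∩ B j) = P.real (A i) := by
    rw [← measureReal_iUnion_fintype _ fun j => (hA i).inter (hB j), ← Set.inter_iUnion, uB,
      Set.inter_univ]
    exact fun j j' h => (dB h).mono Set.inter_subset_right Set.inter_subset_right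
  have hle : ∑ i, ∑ j, |P.real (A i ∩ B j) - P.real (A i) * P.real (B j)|
      ≤ ∑ i, ∑ j, (P.real (A i ∩ B j) + P.real (A i) * P.real (B j)) :=
    Finset.sum_le_sum fun i _ => Finset.sum_le_sum fun j _ => (abs_sub _ _).trans_eq (by
      rw [abs_of_nonneg measureReal_nonneg, abs_of_nonneg (by positivity)])
  simp only [Finset.sum_add_distrib, sum_inter, ← Finset.mul_sum, sum_B, mul_one, sum_A] at hle
  linarith

lemma le_betaCoef (hMA : MA ≤ mΩ) (hMB : MB ≤ mΩ) {I J : ℕ} {A : Fin I → Set Ω}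
    {B : Fin J → Set Ω} (hA : ∀ i, MeasurableSet[MA] (A i)) (hB : ∀ j, MeasurableSet[MB] (B j))
    (dA : Pairwise (Function.onFun Disjoint A)) (dB : Pairwise (Function.onFun Disjoint B))
    (uA : (⋃ i, A i) = Set.univ) (uB : (⋃ j, B j) = Set.univ) :
    2⁻¹ * ∑ i, ∑ j, |P.real (A i ∩ B j) - P.real (A i) * P.real (B j)| ≤ betaCoef P MA MB := by
  refine le_csSup ⟨1, ?_⟩ ⟨I, J, A, B, hA, hB, dA, dB, uA, uB, rfl⟩
  rintro _ ⟨I, J, A, B, hA, hB, dA, dB, uA, uB, rfl⟩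
  exact half_sum_abs_sub_le_one (fun i => hMA _ (hA i)) (fun j => hMB _ (hB j)) dA dB uA uB

lemma betaCoef_le_one (hMA : MA ≤ mΩ) (hMB : MB ≤ mΩ) : betaCoef P MA MB ≤ 1 := by
  refine Real.sSup_le ?_ zero_le_one
  rintro _ ⟨I, J, A, B, hA, hB, dA, dB, uA, uB, rfl⟩
  exact half_sum_abs_sub_le_one (fun i => hMA _ (hA i)) (fun j => hMB _ (hB j)) dA dB uA uB

lemma tvLe_betaCoef_of_fin (hMA : MA ≤ mΩ) (hMB : MB ≤ mΩ) {I J : ℕ} {x : Ω → Fin I}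
    {y : Ω → Fin J} (hx : Measurable[MA] x) (hy : Measurable[MB] y) :
    TVLe (P.map fun ω => (x ω, y ω)) ((P.map x).prod (P.map y))
      (ENNReal.ofReal (betaCoef P MA MB)) := by
  have hx' : Measurable x := hx.mono hMA le_rfl
  have hy' : Measurable y := hy.mono hMB le_rfl
  have : IsProbabilityMeasure (P.map x) := Measure.isProbabilityMeasure_map hx'.aemeasurable
  have : IsProbabilityMeasure (P.map y) := Measure.isProbabilityMeasure_map hy'.aemeasurable
  have : IsProbabilityMeasure (P.map fun ω => (x ω, y ω)) :=
    Measure.isProbabilityMeasure_map (by fun_prop)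
  refine (TVLe.of_fintype _ _).mono (ENNReal.ofReal_le_ofReal ?_)
  have hcells := le_betaCoef (P := P) hMA hMB (A := fun i => x ⁻¹' {i}) (B := fun j => y ⁻¹' {j})
    (fun i => hx (measurableSet_singleton i)) (fun j => hy (measurableSet_singleton j))
    (fun i i' h => .preimage _ (Set.disjoint_singleton.2 h))
    (fun j j' h => .preimage _ (Set.disjoint_singleton.2 h))
    (by ext; simp) (by ext; simp)
  rw [← Fintype.sum_prod_type'] at hcells
  refine (mul_le_mul_of_nonneg_left (Finset.sum_le_sum fun z _ => le_of_eq ?_)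
    (by norm_num)).trans hcells
  rw [← Set.singleton_prod_singleton, measureReal_prod_prod,
    map_measureReal_apply hx' (measurableSet_singleton _),
    map_measureReal_apply hy' (measurableSet_singleton _),
    map_measureReal_apply (hx'.prodMk hy')
      ((measurableSet_singleton _).prod (measurableSet_singleton _)), Set.mk_preimage_prod]

theorem tvLe_betaCoef (hMA : MA ≤ mΩ) (hMB : MB ≤ mΩ) {x : Ω → X} {y : Ω → Y}
    (hx : Measurable[MA] x) (hy : Measurable[MB] y) :
    TVLe (P.map fun ω => (x ω, y ω)) ((P.map x).prod (P.map y))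
      (ENNReal.ofReal (betaCoef P MA MB)) := by
  have hx' : Measurable x := hx.mono hMA le_rfl
  have hy' : Measurable y := hy.mono hMB le_rfl
  refine .of_grid fun I J f g hf hg => ?_
  rw [Measure.map_map (hf.prodMap hg) (hx'.prodMk hy'), ← Measure.map_prod_map _ _ hf hg,
    Measure.map_map hf hx', Measure.map_map hg hy']
  exact tvLe_betaCoef_of_fin hMA hMB (hf.comp hx) (hg.comp hy)

lemma tvLe_processBetaMix {E : Type*} [MeasurableSpace E] {B : ℕ → Ω → E}
    (hB : ∀ t, Measurable (B t)) (k m : ℕ) {x : Ω → X} {y : Ω → Y}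
    (hx : Measurable[⨆ t ∈ Set.Iic m, MeasurableSpace.comap (B t) inferInstance] x)
    (hy : Measurable[⨆ t ∈ Set.Ici (m + k), MeasurableSpace.comap (B t) inferInstance] y) :
    TVLe (P.map fun ω => (x ω, y ω)) ((P.map x).prod (P.map y))
      (ENNReal.ofReal (processBetaMix P B k)) := by
  have hle (s : Set ℕ) : ⨆ t ∈ s, MeasurableSpace.comap (B t) inferInstance ≤ mΩ :=
    iSup₂_le fun t _ => (hB t).comap_le
  refine (tvLe_betaCoef (hle _) (hle _) hx hy).mono (ENNReal.ofReal_le_ofReal ?_)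
  exact le_ciSup (f := fun m => betaCoef P
      (⨆ t ∈ Set.Iic m, MeasurableSpace.comap (B t) inferInstance)
      (⨆ t ∈ Set.Ici (m + k), MeasurableSpace.comap (B t) inferInstance))
    ⟨1, Set.forall_mem_range.2 fun m => betaCoef_le_one (hle _) (hle _)⟩ m

end BetaMixing

lemma processBetaMix_nonneg {Ω E : Type*} [MeasurableSpace Ω] [MeasurableSpace E]
    (P : Measure Ω) (X : ℕ → Ω → E) (k : ℕ) : 0 ≤ processBetaMix P X k := by
  refine Real.iSup_nonneg fun m => Real.sSup_nonneg ?_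
  rintro _ ⟨I, J, A, B, -, -, -, -, -, -, rfl⟩
  positivity

/-! ### Conditional independence -/

section Kernel

variable {ι X : Type*} {B : ι → Type*} [MeasurableSpace X] [∀ i, MeasurableSpace (B i)]

/-- The product kernel `x ↦ ⨂ i, κ i x` of a finite family of Markov kernels. -/
noncomputable def piKernel [Fintype ι] (κ : ∀ i, Kernel X (B i)) [∀ i, IsMarkovKernel (κ i)] :
    Kernel X (∀ i, B i) where
  toFun x := Measure.pi fun i => κ i x
  measurable' := by
    refine .measure_of_isPiSystem_of_isProbabilityMeasure generateFrom_pi.symm isPiSystem_pi ?_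
    rintro _ ⟨s, hs, rfl⟩
    simp only [Measure.pi_pi]
    exact Finset.measurable_prod _ fun i _ => (κ i).measurable_coe (hs i trivial)

variable [Fintype ι] (κ : ∀ i, Kernel X (B i)) [∀ i, IsMarkovKernel (κ i)]

lemma piKernel_apply (x : X) : piKernel κ x = Measure.pi fun i => κ i x := rfl

instance : IsMarkovKernel (piKernel κ) := ⟨fun x => by rw [piKernel_apply]; infer_instance⟩

end Kernel

section CondDistrib

variable {Ω X Y : Type*} [MeasurableSpace Ω] [MeasurableSpace X] [MeasurableSpace Y]
  {P : Measure Ω} [IsProbabilityMeasure P]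

lemma hasCondDistrib_of_condDistrib_ae_eq [StandardBorelSpace Y] [Nonempty Y] {x : Ω → X}
    {y : Ω → Y} (hx : Measurable x) (hy : Measurable y) {κ : Kernel X Y} [IsMarkovKernel κ]
    (h : condDistrib y x P =ᵐ[P.map x] κ) : HasCondDistrib y x κ P where
  aemeasurable := by fun_prop
  map_eq := by rw [← Measure.compProd_congr h, compProd_map_condDistrib hy.aemeasurable]

/-- Unlike in `HasCondDistrib.comp_right`, the kernels need only agree on the range of `z`. -/
lemma hasCondDistrib_comp_of_forall_apply_eq {Z : Type*} [MeasurableSpace Z] {z : Ω → Z}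
    {y : Ω → Y} {κ : Kernel Z Y} [IsMarkovKernel κ] (h : HasCondDistrib y z κ P) {f : Z → X}
    (hf : Measurable f) {κ' : Kernel X Y} [IsMarkovKernel κ']
    (hκ : ∀ ω, κ (z ω) = κ' (f (z ω))) : HasCondDistrib y (fun ω => f (z ω)) κ' P where
  aemeasurable := by fun_prop
  map_eq := by
    have hz : AEMeasurable z P := h.aemeasurable_fst
    have : IsProbabilityMeasure (P.map z) := Measure.isProbabilityMeasure_map hz
    have : IsProbabilityMeasure (P.map fun ω => f (z ω)) :=
      Measure.isProbabilityMeasure_map (by fun_prop)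
    have hF : Measurable fun v : Z × Y => (f v.1, v.2) := by fun_prop
    ext s hs
    calc P.map (fun ω => (f (z ω), y ω)) s
        = (P.map z ⊗ₘ κ).map (fun v => (f v.1, v.2)) s := by
          rw [← h.map_eq, AEMeasurable.map_map_of_aemeasurable (by fun_prop) h.aemeasurable]; rfl
      _ = ∫⁻ ω, κ (z ω) (Prod.mk (f (z ω)) ⁻¹' s) ∂P := by
          rw [Measure.map_apply hF hs, Measure.compProd_apply (hF hs),
            lintegral_map' (Kernel.measurable_kernel_prodMk_left (hF hs)).aemeasurable hz]; rfl
      _ = (P.map (fun ω => f (z ω)) ⊗ₘ κ') s := by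
          rw [Measure.compProd_apply hs, lintegral_map'
            (Kernel.measurable_kernel_prodMk_left hs).aemeasurable (by fun_prop)]
          simp only [hκ]

lemma lintegral_mul_indicator_of_hasCondDistrib {x : Ω → X} {y : Ω → Y} {κ : Kernel X Y}
    [IsMarkovKernel κ] (h : HasCondDistrib y x κ P) {g : X → ENNReal} (hg : Measurable g)
    {s : Set Y} (hs : MeasurableSet s) :
    ∫⁻ ω, g (x ω) * s.indicator 1 (y ω) ∂P = ∫⁻ ω, g (x ω) * κ (x ω) s ∂P := by
  have hs1 : Measurable (s.indicator (1 : Y → ENNReal)) := measurable_one.indicator hs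
  have hκ : Measurable fun a => κ a s := κ.measurable_coe hs
  calc ∫⁻ ω, g (x ω) * s.indicator 1 (y ω) ∂P
      = ∫⁻ z, g z.1 * s.indicator 1 z.2 ∂(P.map x ⊗ₘ κ) :=
        h.lintegral_comp (f := fun z => g z.1 * s.indicator 1 z.2) (by fun_prop)
    _ = ∫⁻ a, g a * κ a s ∂P.map x := by
        rw [Measure.lintegral_compProd (by fun_prop)]
        refine lintegral_congr fun a => ?_
        dsimp only
        rw [lintegral_const_mul _ hs1, lintegral_indicator_one hs]
    _ = ∫⁻ ω, g (x ω) * κ (x ω) s ∂P :=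
        lintegral_map' (by fun_prop) h.aemeasurable_fst

variable {ι : Type*} {B : ι → Type*} [∀ i, MeasurableSpace (B i)] {x : Ω → X}
  {a : ∀ i, Ω → B i} {κ : ∀ i, Kernel X (B i)} [∀ i, IsMarkovKernel (κ i)]

lemma lintegral_mul_prod_indicator
    (h : ∀ i, HasCondDistrib (a i) (fun ω => (x ω, fun j : {j // j ≠ i} => a j.1 ω))
      ((κ i).prodMkRight (∀ j : {j // j ≠ i}, B j)) P)
    {s : ∀ i, Set (B i)} (hs : ∀ i, MeasurableSet (s i)) (F : Finset ι) {g : X → ENNReal}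
    (hg : Measurable g) :
    ∫⁻ ω, g (x ω) * ∏ i ∈ F, (s i).indicator 1 (a i ω) ∂P
      = ∫⁻ ω, g (x ω) * ∏ i ∈ F, κ i (x ω) (s i) ∂P := by
  classical
  induction F using Finset.induction_on generalizing g with
  | empty => simp
  | insert i F hi ih =>
    have hne (j : F) : (j : ι) ≠ i := fun hji => hi (hji ▸ j.2)
    have hs1 (j) : Measurable ((s j).indicator (1 : B j → ENNReal)) :=
      measurable_one.indicator (hs j)
    have hκ : Measurable fun x => κ i x (s i) := (κ i).measurable_coe (hs i)
    calc ∫⁻ ω, g (x ω) * ∏ j ∈ insert i F, (s j).indicator 1 (a j ω) ∂P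
        = ∫⁻ ω, (g (x ω) * ∏ j : F, (s j).indicator 1 (a j ω)) * (s i).indicator 1 (a i ω) ∂P := by
          refine lintegral_congr fun ω => ?_
          rw [Finset.prod_insert hi, Finset.prod_coe_sort F fun j => (s j).indicator 1 (a j ω)]
          ring
      _ = ∫⁻ ω, (g (x ω) * ∏ j : F, (s j).indicator 1 (a j ω)) * κ i (x ω) (s i) ∂P :=
          lintegral_mul_indicator_of_hasCondDistrib (h i)
            (g := fun z => g z.1 * ∏ j : F, (s j).indicator 1 (z.2 ⟨j, hne j⟩))
            (by fun_prop) (hs i)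
      _ = ∫⁻ ω, (g (x ω) * κ i (x ω) (s i)) * ∏ j ∈ F, (s j).indicator 1 (a j ω) ∂P := by
          refine lintegral_congr fun ω => ?_
          rw [Finset.prod_coe_sort F fun j => (s j).indicator 1 (a j ω)]
          ring
      _ = ∫⁻ ω, g (x ω) * ∏ j ∈ insert i F, κ j (x ω) (s j) ∂P := by
          rw [ih (g := fun x => g x * κ i x (s i)) (by fun_prop)]
          simp only [Finset.prod_insert hi, mul_assoc]

lemma ext_prod_pi [Finite ι] {μ ν : Measure (X × ∀ i, B i)} [IsFiniteMeasure μ]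
    (h : ∀ u, MeasurableSet u → ∀ s : ∀ i, Set (B i), (∀ i, MeasurableSet (s i)) →
      μ (u ×ˢ Set.univ.pi s) = ν (u ×ˢ Set.univ.pi s)) : μ = ν := by
  refine ext_of_generate_finite _ (generateFrom_eq_prod MeasurableSpace.generateFrom_measurableSet
    generateFrom_pi isCountablySpanning_measurableSet
    (.pi fun i => isCountablySpanning_measurableSet)).symm
    (MeasurableSpace.isPiSystem_measurableSet.prod isPiSystem_pi) ?_ ?_
  · rintro _ ⟨u, hu, _, ⟨s, hs, rfl⟩, rfl⟩
    exact h u hu s fun i => hs i trivial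
  · simpa using h _ .univ (fun i => Set.univ) fun i => .univ

theorem hasCondDistrib_piKernel [Fintype ι] (hx : Measurable x) (ha : ∀ i, Measurable (a i))
    (h : ∀ i, HasCondDistrib (a i) (fun ω => (x ω, fun j : {j // j ≠ i} => a j.1 ω))
      ((κ i).prodMkRight (∀ j : {j // j ≠ i}, B j)) P) :
    HasCondDistrib (fun ω i => a i ω) x (piKernel κ) P where
  aemeasurable := by fun_prop
  map_eq := by
    classical
    have : IsProbabilityMeasure (P.map x) := Measure.isProbabilityMeasure_map hx.aemeasurable
    have : IsProbabilityMeasure (P.map fun ω => (x ω, fun i => a i ω)) :=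
      Measure.isProbabilityMeasure_map (by fun_prop)
    refine ext_prod_pi fun u hu s hs => ?_
    have hbox := lintegral_mul_prod_indicator h hs Finset.univ (measurable_one.indicator hu)
    have hpre : MeasurableSet ((fun ω => (x ω, fun i => a i ω)) ⁻¹' (u ×ˢ Set.univ.pi s)) :=
      (by fun_prop : Measurable fun ω => (x ω, fun i => a i ω)) (hu.prod (.univ_pi hs))
    have hind (ω) : ((fun ω => (x ω, fun i => a i ω)) ⁻¹' (u ×ˢ Set.univ.pi s)).indicator 1 ω
        = u.indicator 1 (x ω) * ∏ i, (s i).indicator (1 : B i → ENNReal) (a i ω) := by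
      simp [Set.indicator_apply, Finset.prod_ite_zero, ← ite_and, and_comm]
    rw [Measure.map_apply (by fun_prop) (hu.prod (.univ_pi hs)), ← lintegral_indicator_one hpre,
      lintegral_congr hind, hbox, Measure.compProd_apply_prod hu (.univ_pi hs),
      ← lintegral_indicator hu, lintegral_map ((piKernel κ).measurable_coe (.univ_pi hs)
        |>.indicator hu) hx]
    refine lintegral_congr fun ω => ?_
    simp [Set.indicator_apply, piKernel_apply]

end CondDistrib

lemma map_zip_pi_compProd_piKernel {ι : Type*} [Fintype ι] {X B : ι → Type*}
    [∀ i, MeasurableSpace (X i)] [∀ i, MeasurableSpace (B i)] (μ : ∀ i, Measure (X i))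
    [∀ i, IsProbabilityMeasure (μ i)] (κ : ∀ i, Kernel (X i) (B i)) [∀ i, IsMarkovKernel (κ i)] :
    (Measure.pi μ ⊗ₘ piKernel fun i => (κ i).comap (Function.eval i) (measurable_pi_apply i)).map
      (fun z i => (z.1 i, z.2 i)) = Measure.pi fun i => μ i ⊗ₘ κ i := by
  refine (Measure.pi_eq fun s hs => ?_).symm
  have hzip : Measurable fun (z : (∀ i, X i) × ∀ i, B i) i => (z.1 i, z.2 i) := by fun_prop
  have hslice (i) : Measurable fun b => κ i b (Prod.mk b ⁻¹' s i) :=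
    Kernel.measurable_kernel_prodMk_left (hs i)
  rw [Measure.map_apply hzip (.univ_pi hs), Measure.compProd_apply (hzip (.univ_pi hs))]
  have hbox (x : ∀ i, X i) :
      Prod.mk x ⁻¹' ((fun (z : (∀ i, X i) × ∀ i, B i) i => (z.1 i, z.2 i)) ⁻¹' Set.univ.pi s)
        = Set.univ.pi fun i => Prod.mk (x i) ⁻¹' s i := by
    ext; simp
  simp only [hbox, piKernel_apply, Measure.pi_pi, Kernel.comap_apply, Function.eval]
  rw [lintegral_prod_eq_prod_lintegral_of_indepFun Finset.univ _
    (iIndepFun_pi fun i => (hslice i).aemeasurable) fun i =>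
      (hslice i).comp (measurable_pi_apply i)]
  refine Finset.prod_congr rfl fun i _ => ?_
  rw [(measurePreserving_eval μ i).lintegral_comp (hslice i), Measure.compProd_apply (hs i)]

/-! ### Decoupling the transitions of a fold -/

section Fold

variable {Ω E X F : Type*} [MeasurableSpace E] [MeasurableSpace X] [MeasurableSpace F]
  {B : ℕ → Ω → E}

lemma measurable_iSup_comap_of_mem {I : Set ℕ} {t : ℕ} (ht : t ∈ I) :
    Measurable[⨆ t ∈ I, MeasurableSpace.comap (B t) inferInstance] (B t) :=
  (comap_measurable (B t)).mono (le_iSup₂_of_le t ht le_rfl) le_rfl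

variable [MeasurableSpace Ω] {P : Measure Ω} [IsProbabilityMeasure P]

lemma tvLe_pi_consecutive (hB : ∀ t, Measurable (B t)) (k : ℕ) {K : ℕ} (hK : 0 < K) (M : ℕ) :
    TVLe (P.map fun ω (i : Fin (M + 1)) => (B (k + i * K) ω, B (k + i * K + 1) ω))
      (Measure.pi fun i : Fin (M + 1) => P.map fun ω => (B (k + i * K) ω, B (k + i * K + 1) ω))
      (M * ENNReal.ofReal (processBetaMix P B (K - 1))) := by
  refine TVLe.pi_of_forall_succ (x := fun i ω => (B (k + i * K) ω, B (k + i * K + 1) ω))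
    (fun i => by fun_prop) (fun m => ?_) M
  have hpast : Measurable[⨆ t ∈ Set.Iic (k + m * K + 1), MeasurableSpace.comap (B t) inferInstance]
      fun ω (i : Fin (m + 1)) => (B (k + i * K) ω, B (k + i * K + 1) ω) := by
    refine @measurable_pi_lambda _ _ _ (_) _ _ fun i => ?_
    have hi : (i : ℕ) * K ≤ m * K := Nat.mul_le_mul_right K (Nat.lt_succ_iff.1 i.2)
    exact .prodMk (measurable_iSup_comap_of_mem (by simp; omega))
      (measurable_iSup_comap_of_mem (by simp; omega))
  have hfuture : Measurable[⨆ t ∈ Set.Ici (k + m * K + 1 + (K - 1)),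
      MeasurableSpace.comap (B t) inferInstance]
      fun ω => (B (k + (m + 1) * K) ω, B (k + (m + 1) * K + 1) ω) :=
    have hgap : k + m * K + 1 + (K - 1) = k + (m + 1) * K := by rw [add_one_mul]; omega
    .prodMk (measurable_iSup_comap_of_mem (by simp; omega))
      (measurable_iSup_comap_of_mem (by simp; omega))
  have hswap := (tvLe_processBetaMix (P := P) hB (K - 1) (k + m * K + 1) hpast hfuture).map
    measurable_swap
  rwa [Measure.map_map measurable_swap (by fun_prop), Measure.prod_swap] at hswap

variable {c : E → X} {a : ℕ → Ω → F} {κ : ℕ → Kernel X F} [∀ t, IsMarkovKernel (κ t)]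

lemma hasCondDistrib_pi_of_resampled (hc : Measurable c) (hB : ∀ t, Measurable (B t))
    (ha : ∀ t, Measurable (a t)) (hresample : ∀ t, HasCondDistrib (a t)
      (fun ω => (c (B t ω), (fun t' => B t' ω, fun t' : {t' : ℕ // t' ≠ t} => a t'.1 ω)))
      ((κ t).prodMkRight _) P) {ι : Type*} [Fintype ι] {τ : ι → ℕ} (hτ : τ.Injective) :
    HasCondDistrib (fun ω i => a (τ i) ω) (fun ω i => (B (τ i) ω, B (τ i + 1) ω))
      (piKernel fun i => ((κ (τ i)).comap (fun v : E × E => c v.1) (by fun_prop)).comap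
        (Function.eval i) (measurable_pi_apply i)) P := by
  refine hasCondDistrib_piKernel (by fun_prop) (by fun_prop) fun i => ?_
  exact hasCondDistrib_comp_of_forall_apply_eq (hresample (τ i))
    (f := fun z => (fun i => (z.2.1 (τ i), z.2.1 (τ i + 1)),
      fun j : {j // j ≠ i} => z.2.2 ⟨τ j, hτ.ne j.2⟩)) (by fun_prop) fun ω => rfl

lemma tvLe_pi_transitions (hc : Measurable c) (hB : ∀ t, Measurable (B t))
    (ha : ∀ t, Measurable (a t)) (hresample : ∀ t, HasCondDistrib (a t)
      (fun ω => (c (B t ω), (fun t' => B t' ω, fun t' : {t' : ℕ // t' ≠ t} => a t'.1 ω)))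
      ((κ t).prodMkRight _) P) (k : ℕ) {K : ℕ} (hK : 0 < K) (M : ℕ) :
    TVLe (P.map fun ω (i : Fin (M + 1)) =>
        ((B (k + i * K) ω, B (k + i * K + 1) ω), a (k + i * K) ω))
      (Measure.pi fun i : Fin (M + 1) =>
        P.map fun ω => ((B (k + i * K) ω, B (k + i * K + 1) ω), a (k + i * K) ω))
      (M * ENNReal.ofReal (processBetaMix P B (K - 1))) := by
  let τ (i : Fin (M + 1)) : ℕ := k + i * K
  have hτ : τ.Injective := fun i j hij => Fin.ext
    (Nat.eq_of_mul_eq_mul_right hK (Nat.add_left_cancel hij))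
  let V (t : ℕ) (ω : Ω) : E × E := (B t ω, B (t + 1) ω)
  let κV (t : ℕ) : Kernel (E × E) F := (κ t).comap (fun v : E × E => c v.1) (by fun_prop)
  have hV (t : ℕ) : Measurable (V t) := by fun_prop
  have hVprob (t : ℕ) : IsProbabilityMeasure (P.map (V t)) :=
    Measure.isProbabilityMeasure_map (hV t).aemeasurable
  have : IsProbabilityMeasure (P.map fun ω (i : Fin (M + 1)) => V (τ i) ω) :=
    Measure.isProbabilityMeasure_map (by fun_prop)
  have hsingle (t : ℕ) : P.map (fun ω => (V t ω, a t ω)) = P.map (V t) ⊗ₘ κV t :=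
    (hasCondDistrib_comp_of_forall_apply_eq (hresample t)
      (f := fun z => (z.2.1 t, z.2.1 (t + 1))) (by fun_prop) fun ω => rfl).map_eq
  have hjoint : P.map (fun ω => (fun i => V (τ i) ω, fun i => a (τ i) ω)) = _ :=
    (hasCondDistrib_pi_of_resampled hc hB ha hresample hτ).map_eq
  have hV_indep : TVLe (P.map fun ω (i : Fin (M + 1)) => V (τ i) ω)
      (Measure.pi fun i => P.map (V (τ i))) _ := tvLe_pi_consecutive hB k hK M
  have h := (hV_indep.compProd
    (piKernel fun i => (κV (τ i)).comap (Function.eval i) (measurable_pi_apply i))).map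
      (g := fun z i => (z.1 i, z.2 i)) (by fun_prop)
  rw [map_zip_pi_compProd_piKernel] at h
  simp only [← hsingle] at h
  rwa [← hjoint, Measure.map_map (by fun_prop) (by fun_prop)] at h

end Fold

/-! ### Exchangeability of the null coordinates -/

lemma measurePreserving_prodMap_compProd {X Y : Type*} [MeasurableSpace X] [MeasurableSpace Y]
    {μ : Measure X} [SFinite μ] {κ : Kernel X Y} [IsSFiniteKernel κ] {f : X → X} {g : Y → Y}
    (hf : MeasurePreserving f μ μ) (hg : ∀ x, MeasurePreserving g (κ x) (κ (f x))) :
    MeasurePreserving (Prod.map f g) (μ ⊗ₘ κ) (μ ⊗ₘ κ) := by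
  rcases isEmpty_or_nonempty X with hX | ⟨⟨x₀⟩⟩
  · exact ⟨measurable_of_empty _, by simp [Measure.eq_zero_of_isEmpty]⟩
  have hfg : Measurable (Prod.map f g) := hf.measurable.prodMap (hg x₀).measurable
  refine ⟨hfg, Measure.ext fun s hs => ?_⟩
  calc (μ ⊗ₘ κ).map (Prod.map f g) s
      = ∫⁻ x, κ x (g ⁻¹' (Prod.mk (f x) ⁻¹' s)) ∂μ := by
        rw [Measure.map_apply hfg hs, Measure.compProd_apply (hfg hs)]; rfl
    _ = ∫⁻ x, κ (f x) (Prod.mk (f x) ⁻¹' s) ∂μ :=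
        lintegral_congr fun x =>
          (hg x).measure_preimage (measurable_prodMk_left hs).nullMeasurableSet
    _ = (μ ⊗ₘ κ) s := by
        rw [hf.lintegral_comp (Kernel.measurable_kernel_prodMk_left hs), Measure.compProd_apply hs]

section Swap

variable {p : ℕ}

lemma measurable_swapPair (E : Finset (Fin p)) :
    Measurable fun z : (Fin p → ℝ) × (Fin p → ℝ) => swapPair E z.1 z.2 := by
  have hite (j : Fin p) : Measurable fun z : ℝ × ℝ => if j ∈ E then z.2 else z.1 := by
    split_ifs <;> fun_prop
  exact .prodMk (measurable_pi_lambda _ fun j => (hite j).comp (by fun_prop : Measurable fun z :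
    (Fin p → ℝ) × (Fin p → ℝ) => (z.1 j, z.2 j)))
    (measurable_pi_lambda _ fun j => (hite j).comp (by fun_prop : Measurable fun z :
    (Fin p → ℝ) × (Fin p → ℝ) => (z.2 j, z.1 j)))

lemma measurePreserving_swapPair (E : Finset (Fin p)) (μ : Fin p → Measure ℝ)
    [∀ j, SigmaFinite (μ j)] :
    MeasurePreserving (fun z : (Fin p → ℝ) × (Fin p → ℝ) => swapPair E z.1 z.2)
      ((Measure.pi μ).prod (Measure.pi μ)) ((Measure.pi μ).prod (Measure.pi μ)) := by
  have hcoord (j : Fin p) : MeasurePreserving (if j ∈ E then Prod.swap else id)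
      ((μ j).prod (μ j)) ((μ j).prod (μ j)) := by
    split_ifs
    · exact Measure.measurePreserving_swap
    · exact .id _
  refine (measurePreserving_arrowProdEquivProdArrow ℝ ℝ (Fin p) μ μ).of_semiconj
    (measurePreserving_pi _ _ hcoord) (fun z => ?_) (measurable_swapPair E)
  ext j <;> by_cases hj : j ∈ E <;>
    simp [swapPair, MeasurableEquiv.arrowProdEquivProdArrow, Equiv.arrowProdEquivProdArrow, hj]

variable {𝒮 : Type*}

/-- The transition tuple `(A_t, Ã_t, S_t, (R_t, S_{t+1}))` recorded in the data buffer. -/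
abbrev Transition (p : ℕ) (𝒮 : Type*) := (Fin p → ℝ) × (Fin p → ℝ) × 𝒮 × (ℝ × 𝒮)

/-- Exchange the coordinates in `E` of the action and the knockoff action of a transition. -/
def swapTransition (E : Finset (Fin p)) (d : Transition p 𝒮) : Transition p 𝒮 :=
  ((swapPair E d.1 d.2.1).1, (swapPair E d.1 d.2.1).2, d.2.2.1, d.2.2.2)

variable [MeasurableSpace 𝒮]

lemma measurable_swapTransition (E : Finset (Fin p)) :
    Measurable (swapTransition (𝒮 := 𝒮) E) := by
  have h : Measurable fun d : Transition p 𝒮 => swapPair E d.1 d.2.1 :=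
    (measurable_swapPair E).comp (by fun_prop : Measurable fun d : Transition p 𝒮 => (d.1, d.2.1))
  exact h.fst.prodMk (h.snd.prodMk (by fun_prop))

variable {Ω : Type*} [MeasurableSpace Ω] {P : Measure Ω} [IsProbabilityMeasure P]
  {G E : Finset (Fin p)} {S : Ω → 𝒮} {A A' : Ω → Fin p → ℝ} {Y : Ω → ℝ × 𝒮}
  {κ : Fin p → Kernel 𝒮 ℝ} [∀ j, IsMarkovKernel (κ j)]
  {ν : Kernel (𝒮 × ({j // j ∈ G} → ℝ)) (ℝ × 𝒮)} [IsMarkovKernel ν]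

lemma measurePreserving_swapTransition
    (hA : HasCondDistrib (fun ω => (A ω, A' ω)) S (piKernel κ ×ₖ piKernel κ) P)
    (hY : HasCondDistrib Y (fun ω => (S ω, A ω, A' ω))
      (ν.comap (fun x => (x.1, fun j => x.2.1 j.1)) (by fun_prop)) P) (hE : Disjoint E G) :
    MeasurePreserving (swapTransition E) (P.map fun ω => (A ω, A' ω, S ω, Y ω))
      (P.map fun ω => (A ω, A' ω, S ω, Y ω)) := by
  let T : 𝒮 × (Fin p → ℝ) × (Fin p → ℝ) → 𝒮 × (Fin p → ℝ) × (Fin p → ℝ) :=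
    Prod.map id fun z => swapPair E z.1 z.2
  have hX : MeasurePreserving T (P.map fun ω => (S ω, A ω, A' ω))
      (P.map fun ω => (S ω, A ω, A' ω)) := by
    rw [hA.map_eq]
    refine measurePreserving_prodMap_compProd (.id _) fun s => ?_
    simp only [Kernel.prod_apply, piKernel_apply, id]
    exact measurePreserving_swapPair E _
  have hXY : MeasurePreserving (Prod.map T id) (P.map fun ω => ((S ω, A ω, A' ω), Y ω))
      (P.map fun ω => ((S ω, A ω, A' ω), Y ω)) := by
    rw [hY.map_eq]
    refine measurePreserving_prodMap_compProd hX fun x => ?_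
    have hnull (j : {j // j ∈ G}) : (T x).2.1 j.1 = x.2.1 j.1 :=
      if_neg fun hj => Finset.disjoint_left.1 hE hj j.2
    simp only [Kernel.comap_apply, hnull]
    exact .id _
  let e : (𝒮 × (Fin p → ℝ) × (Fin p → ℝ)) × ℝ × 𝒮 → Transition p 𝒮 :=
    fun z => (z.1.2.1, z.1.2.2, z.1.1, z.2)
  have he : MeasurePreserving e (P.map fun ω => ((S ω, A ω, A' ω), Y ω))
      (P.map fun ω => (A ω, A' ω, S ω, Y ω)) :=
    ⟨by fun_prop, by rw [AEMeasurable.map_map_of_aemeasurable (by fun_prop) hY.aemeasurable]; rfl⟩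
  exact he.of_semiconj hXY (fun _ => rfl) (measurable_swapTransition E)

end Swap

/-! ### The data buffer -/

section Buffer

variable {p : ℕ} {Ω 𝒮 : Type*} [MeasurableSpace Ω] [MeasurableSpace 𝒮]

/-- A process `(S_t, A_t, R_t)` with knockoff actions `Ã_t = A' t`, as in assumptions (i) and (ii):
`κ t j s` is the law of the `j`-th coordinates of `A_t` and of `Ã_t` given `S_t = s`, and `ν t` is
the law of `(R_t, S_{t+1})` given `S_t` and the coordinates of `A_t` in `G`.  The process need not
be stationary, so both depend on `t`. -/
structure IsKnockoffProcess (P : Measure Ω) (G : Finset (Fin p)) (S : ℕ → Ω → 𝒮)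
    (A A' : ℕ → Ω → Fin p → ℝ) (R : ℕ → Ω → ℝ) (κ : ℕ → Fin p → Kernel 𝒮 ℝ)
    [∀ t j, IsMarkovKernel (κ t j)] (ν : ℕ → Kernel (𝒮 × ({j // j ∈ G} → ℝ)) (ℝ × 𝒮)) :
    Prop where
  measurable_state : ∀ t, Measurable (S t)
  measurable_action : ∀ t, Measurable (A t)
  measurable_knockoff : ∀ t, Measurable (A' t)
  measurable_reward : ∀ t, Measurable (R t)
  action_knockoff : ∀ t, HasCondDistrib (fun ω => (A t ω, A' t ω)) (S t)
    (piKernel (κ t) ×ₖ piKernel (κ t)) P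
  knockoff_resampled : ∀ t, HasCondDistrib (A' t)
    (fun ω => (S t ω, (fun t' => (S t' ω, A t' ω, R t' ω), fun t' : {t' // t' ≠ t} => A' t'.1 ω)))
    ((piKernel (κ t)).prodMkRight _) P
  outcome : ∀ t, HasCondDistrib (fun ω => (R t ω, S (t + 1) ω)) (fun ω => (S t ω, A t ω, A' t ω))
    ((ν t).comap (fun x => (x.1, fun j => x.2.1 j.1)) (by fun_prop)) P

/-- The space of trajectories `t ↦ (S_t, A_t, Ã_t, R_t)`. -/
abbrev Trajectory (p : ℕ) (𝒮 : Type*) := ℕ → 𝒮 × (Fin p → ℝ) × (Fin p → ℝ) × ℝ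

/-- The transition tuple of a trajectory at time `t`. -/
def Trajectory.transition (x : Trajectory p 𝒮) (t : ℕ) : Transition p 𝒮 :=
  ((x t).2.1, (x t).2.2.1, (x t).1, ((x t).2.2.2, (x (t + 1)).1))

@[fun_prop]
lemma Trajectory.measurable_transition (t : ℕ) :
    Measurable fun x : Trajectory p 𝒮 => x.transition t := by
  unfold Trajectory.transition; fun_prop

/-- The flip-sign property: exchanging the `j`-th coordinates of all actions and knockoff actions
of the data flips the sign of the `j`-th statistic and leaves the others unchanged. -/
def HasFlipSign {ι : Type*} (W : (ι → Transition p 𝒮) → Fin p → ℝ) : Prop :=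
  ∀ (E : Finset (Fin p)) (d : ι → Transition p 𝒮) (j : Fin p),
    W (fun i => swapTransition E (d i)) j = if j ∈ E then -W d j else W d j

omit [MeasurableSpace 𝒮] in
lemma HasFlipSign.apply_swapTransition_singleton {ι : Type*}
    {W : (ι → Transition p 𝒮) → Fin p → ℝ} (hW : HasFlipSign W) (j : Fin p)
    (d : ι → Transition p 𝒮) :
    W (fun i => swapTransition {j} (d i)) = Function.update (W d) j (-W d j) := by
  ext i
  by_cases h : i = j
  · subst h; simp [hW {i} d i]
  · simp [hW {j} d i, h]

namespace IsKnockoffProcess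

variable {P : Measure Ω} [IsProbabilityMeasure P] {H G : Finset (Fin p)} {S : ℕ → Ω → 𝒮}
  {A A' : ℕ → Ω → Fin p → ℝ} {R : ℕ → Ω → ℝ} {κ : ℕ → Fin p → Kernel 𝒮 ℝ}
  [∀ t j, IsMarkovKernel (κ t j)] {ν : ℕ → Kernel (𝒮 × ({j // j ∈ G} → ℝ)) (ℝ × 𝒮)}

omit [IsProbabilityMeasure P] in
lemma measurable_trajectory (h : IsKnockoffProcess P G S A A' R κ ν) :
    Measurable fun ω t => (S t ω, A t ω, A' t ω, R t ω) := by
  have := h.measurable_state; have := h.measurable_action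
  have := h.measurable_knockoff; have := h.measurable_reward
  fun_prop

lemma tvLe_pi_transition (h : IsKnockoffProcess P G S A A' R κ ν) (k : ℕ) {K : ℕ} (hK : 0 < K)
    (M : ℕ) : TVLe (P.map fun ω (i : Fin (M + 1)) =>
        Trajectory.transition (fun t => (S t ω, A t ω, A' t ω, R t ω)) (k + i * K))
      (Measure.pi fun i : Fin (M + 1) => P.map fun ω =>
        Trajectory.transition (fun t => (S t ω, A t ω, A' t ω, R t ω)) (k + i * K))
      (M * ENNReal.ofReal (processBetaMix P (fun t ω => (S t ω, A t ω, R t ω)) (K - 1))) := by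
  let B (t : ℕ) (ω : Ω) : 𝒮 × (Fin p → ℝ) × ℝ := (S t ω, A t ω, R t ω)
  have hB (t : ℕ) : Measurable (B t) :=
    (h.measurable_state t).prodMk ((h.measurable_action t).prodMk (h.measurable_reward t))
  have ha := h.measurable_knockoff
  let e (z : ((𝒮 × (Fin p → ℝ) × ℝ) × 𝒮 × (Fin p → ℝ) × ℝ) × (Fin p → ℝ)) : Transition p 𝒮 :=
    (z.1.1.2.1, z.2, z.1.1.1, (z.1.1.2.2, z.1.2.1))
  have he : Measurable e := by fun_prop
  have hpair (t : ℕ) : Measurable fun ω => ((B t ω, B (t + 1) ω), A' t ω) := by fun_prop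
  have (t : ℕ) : IsProbabilityMeasure (P.map fun ω => ((B t ω, B (t + 1) ω), A' t ω)) :=
    Measure.isProbabilityMeasure_map (hpair t).aemeasurable
  have htv := (tvLe_pi_transitions measurable_fst hB ha h.knockoff_resampled k hK M).map
    (g := fun z i => e (z i)) (by fun_prop)
  rw [Measure.map_map (by fun_prop) (by fun_prop), Measure.pi_map_pi fun _ => he.aemeasurable]
    at htv
  simp only [Measure.map_map he (hpair _)] at htv
  exact htv

lemma measurePreserving_swapTransition [∀ t, IsMarkovKernel (ν t)]
    (h : IsKnockoffProcess P G S A A' R κ ν) {E : Finset (Fin p)} (hE : Disjoint E G) (t : ℕ) :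
    MeasurePreserving (swapTransition E)
      (P.map fun ω => Trajectory.transition (fun t => (S t ω, A t ω, A' t ω, R t ω)) t)
      (P.map fun ω => Trajectory.transition (fun t => (S t ω, A t ω, A' t ω, R t ω)) t) :=
  _root_.measurePreserving_swapTransition (h.action_knockoff t) (h.outcome t) hE

lemma isProbabilityMeasure_map_transition (h : IsKnockoffProcess P G S A A' R κ ν) (t : ℕ) :
    IsProbabilityMeasure
      (P.map fun ω => Trajectory.transition (fun t => (S t ω, A t ω, A' t ω, R t ω)) t) :=
  Measure.isProbabilityMeasure_map
    ((Trajectory.measurable_transition t).comp h.measurable_trajectory).aemeasurable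

lemma integral_mFDP_pi_le [∀ t, IsMarkovKernel (ν t)] (h : IsKnockoffProcess P G S A A' R κ ν)
    {α : ℝ} (hα : 0 < α) (hH : Disjoint H G) {ι : Type*} [Fintype ι] {N : ℕ} (τ : ι → ℕ)
    {V : (Fin N → ι → Transition p 𝒮) → Fin p → ℝ} (hV : Measurable V)
    (hflip : ∀ (j : Fin p) (d : Fin N → ι → Transition p 𝒮),
      V (fun n i => swapTransition {j} (d n i)) = Function.update (V d) j (-V d j)) :
    ∫ d, mFDP α H (knockoffSelect α (V d)) ∂(Measure.pi fun _ => Measure.pi fun i => P.map fun ω =>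
      Trajectory.transition (fun t => (S t ω, A t ω, A' t ω, R t ω)) (τ i)) ≤ α := by
  have := h.isProbabilityMeasure_map_transition
  refine integral_mFDP_knockoffSelect_le hα hV (fun j hj => ?_) fun j _ => hflip j
  exact measurePreserving_pi _ _ fun _ => measurePreserving_pi _ _ fun i =>
    h.measurePreserving_swapTransition
      (Finset.disjoint_singleton_left.2 (Finset.disjoint_left.1 hH hj)) (τ i)

section Fold

variable {Ω' : Type*} [MeasurableSpace Ω'] {P' : Measure Ω'} {N : ℕ}
  {X : Fin N → Ω' → Trajectory p 𝒮}

lemma tvLe_fold (h : IsKnockoffProcess P G S A A' R κ ν) (hX : ∀ n, Measurable (X n))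
    (hlaw : P'.map (fun ω n => X n ω) =
      Measure.pi fun _ => P.map fun ω t => (S t ω, A t ω, A' t ω, R t ω))
    (k : ℕ) {K : ℕ} (hK : 0 < K) (M : ℕ) :
    TVLe (P'.map fun ω n (i : Fin (M + 1)) => (X n ω).transition (k + i * K))
      (Measure.pi fun _ : Fin N => Measure.pi fun i : Fin (M + 1) => P.map fun ω =>
        Trajectory.transition (fun t => (S t ω, A t ω, A' t ω, R t ω)) (k + i * K))
      (N * (M *
        ENNReal.ofReal (processBetaMix P (fun t ω => (S t ω, A t ω, R t ω)) (K - 1)))) := by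
  let path (ω : Ω) : Trajectory p 𝒮 := fun t => (S t ω, A t ω, A' t ω, R t ω)
  have hpath : Measurable path := h.measurable_trajectory
  let fold (x : Trajectory p 𝒮) (i : Fin (M + 1)) : Transition p 𝒮 := x.transition (k + i * K)
  have hfold : Measurable fold := by fun_prop
  have : IsProbabilityMeasure (P.map path) := Measure.isProbabilityMeasure_map hpath.aemeasurable
  have : IsProbabilityMeasure (P.map (fold ∘ path)) :=
    Measure.isProbabilityMeasure_map (hfold.comp hpath).aemeasurable
  have := h.isProbabilityMeasure_map_transition
  have hfoldlaw : P'.map (fun ω n => fold (X n ω)) =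
      Measure.pi fun _ : Fin N => P.map (fold ∘ path) := by
    simp only [← Measure.map_map hfold hpath]
    rw [← Measure.pi_map_pi fun _ => hfold.aemeasurable, ← hlaw,
      Measure.map_map (by fun_prop) (by fun_prop)]
    rfl
  have htv : TVLe (P.map (fold ∘ path)) _ _ := h.tvLe_pi_transition k hK M
  exact hfoldlaw ▸ htv.pi_const N

theorem integral_mFDP_fold_le [∀ t, IsMarkovKernel (ν t)]
    (h : IsKnockoffProcess P G S A A' R κ ν) {α : ℝ} (hα : 0 < α) (hH : Disjoint H G)
    (hX : ∀ n, Measurable (X n))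
    (hlaw : P'.map (fun ω n => X n ω) =
      Measure.pi fun _ => P.map fun ω t => (S t ω, A t ω, A' t ω, R t ω))
    {T K : ℕ} {k : Fin K}
    {W : (Fin N × {t : Fin T // (t : ℕ) % K = k} → Transition p 𝒮) → Fin p → ℝ}
    (hW : Measurable W) (hflip : HasFlipSign W) :
    ∫ ω, mFDP α H (knockoffSelect α (W fun i => (X i.1 ω).transition i.2.1)) ∂P' ≤
      α + N * (((T - 1) / K : ℕ) *
        processBetaMix P (fun t ω => (S t ω, A t ω, R t ω)) (K - 1)) := by
  set M := (T - 1) / K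
  set β := processBetaMix P (fun t ω => (S t ω, A t ω, R t ω)) (K - 1)
  have hβ : 0 ≤ β := processBetaMix_nonneg _ _ _
  have hindex (t : {t : Fin T // (t : ℕ) % K = k}) : (t.1 : ℕ) / K < M + 1 :=
    Nat.lt_succ_of_le (Nat.div_le_div_right (by have := t.1.2; omega))
  let V (d : Fin N → Fin (M + 1) → Transition p 𝒮) : Fin p → ℝ :=
    W fun i => d i.1 ⟨i.2.1 / K, hindex i.2⟩
  have hV : Measurable V := hW.comp (by fun_prop)
  let D (ω : Ω') (n : Fin N) (i : Fin (M + 1)) : Transition p 𝒮 := (X n ω).transition (k + i * K)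
  have hD : Measurable D := by fun_prop
  have hVD (ω : Ω') : V (D ω) = W fun i => (X i.1 ω).transition i.2.1 := by
    refine congrArg W (funext fun i => congrArg (X i.1 ω).transition ?_)
    simpa only [i.2.2] using Nat.mod_add_div' (i.2.1 : ℕ) K
  have hF : Measurable fun d => mFDP α H (knockoffSelect α (V d)) :=
    (measurable_comp_knockoffSelect α (mFDP α H)).comp hV
  have htv := h.tvLe_fold hX hlaw k k.pos (M := M)
  rw [show (N : ENNReal) * (M * ENNReal.ofReal β) = ENNReal.ofReal (N * (M * β)) by
    rw [ENNReal.ofReal_mul (by positivity), ENNReal.ofReal_mul (by positivity),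
      ENNReal.ofReal_natCast, ENNReal.ofReal_natCast]] at htv
  have := h.isProbabilityMeasure_map_transition
  have : IsProbabilityMeasure P' := by
    have := Measure.isProbabilityMeasure_map (μ := P) h.measurable_trajectory.aemeasurable
    rw [← Measure.isProbabilityMeasure_map_iff (measurable_pi_lambda _ hX).aemeasurable, hlaw]
    infer_instance
  calc ∫ ω, mFDP α H (knockoffSelect α (W fun i => (X i.1 ω).transition i.2.1)) ∂P'
      = ∫ d, mFDP α H (knockoffSelect α (V d)) ∂(P'.map D) := by
        simp only [integral_map hD.aemeasurable hF.aestronglyMeasurable, hVD]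
    _ ≤ _ := htv.integral_le (by positivity) hF (fun _ => mFDP_nonneg hα H _)
        fun _ => mFDP_le_one hα H _
    _ ≤ α + N * (M * β) := by
        gcongr
        exact h.integral_mFDP_pi_le hα hH _ hV fun j d =>
          hflip.apply_swapTransition_singleton j _

end Fold

end IsKnockoffProcess

end Buffer

/-! ### Rates -/

section Rates

variable {ρ k0 : ℝ}

lemma neg_mul_log_sub_one_pos (hρ0 : 0 < ρ) (hρ1 : ρ < 1) (hk0 : k0 > -1 / Real.log ρ) :
    0 < -k0 * Real.log ρ - 1 := by
  have := (div_lt_iff_of_neg (Real.log_neg hρ0 hρ1)).1 hk0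
  linarith

lemma pow_eq_rpow_of_eq_mul_log (hρ : 0 < ρ) {x : ℝ} (hx : 0 < x) {K : ℕ}
    (hK : (K : ℝ) = k0 * Real.log x) : ρ ^ K = x ^ (k0 * Real.log ρ) := by
  rw [← Real.rpow_natCast, Real.rpow_def_of_pos hρ, Real.rpow_def_of_pos hx, hK]
  congr 1
  ring

lemma mul_pow_sub_one_le_rpow (hρ : 0 < ρ) {N T K : ℕ} (hN : 0 < N) (hT : 0 < T) (hK : 0 < K)
    (hKlog : (K : ℝ) = k0 * Real.log ((N : ℝ) * T)) :
    (N : ℝ) * (((T - 1) / K : ℕ) * ρ ^ (K - 1)) ≤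
      ρ⁻¹ * (K : ℝ)⁻¹ * ((N : ℝ) * T) ^ (-(-k0 * Real.log ρ - 1)) := by
  have hNT : (0 : ℝ) < (N : ℝ) * T := by positivity
  have hdiv : (((T - 1) / K : ℕ) : ℝ) ≤ T / K :=
    Nat.cast_div_le.trans (by gcongr; exact Nat.sub_le T 1)
  calc (N : ℝ) * (((T - 1) / K : ℕ) * ρ ^ (K - 1))
      ≤ N * (T / K * ρ ^ (K - 1)) := by gcongr
    _ = ρ⁻¹ * (K : ℝ)⁻¹ * (((N : ℝ) * T) * ρ ^ K) := by
        rw [← mul_pow_sub_one hK.ne' ρ]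
        field_simp
    _ = ρ⁻¹ * (K : ℝ)⁻¹ * ((N : ℝ) * T) ^ (-(-k0 * Real.log ρ - 1)) := by
        rw [pow_eq_rpow_of_eq_mul_log hρ hNT hKlog, mul_comm ((N : ℝ) * T),
          ← Real.rpow_add_one hNT.ne']
        congr 2
        ring

end Rates

theorem knockoff_sampling_mFDR_control_general
    {p : ℕ} {Ω 𝒮 : Type*} [MeasurableSpace Ω] [MeasurableSpace 𝒮]
    {P : Measure Ω} [IsProbabilityMeasure P] {H G : Finset (Fin p)} (hH : Disjoint H G)
    {α ρ k0 : ℝ} (hα : 0 < α) (hρ0 : 0 < ρ) (hρ1 : ρ < 1) (hk0 : k0 > -1 / Real.log ρ)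
    {S : ℕ → Ω → 𝒮} {A A' : ℕ → Ω → Fin p → ℝ} {R : ℕ → Ω → ℝ}
    {κ : ℕ → Fin p → Kernel 𝒮 ℝ} [∀ t j, IsMarkovKernel (κ t j)]
    {ν : ℕ → Kernel (𝒮 × ({j // j ∈ G} → ℝ)) (ℝ × 𝒮)} [∀ t, IsMarkovKernel (ν t)]
    (h : IsKnockoffProcess P G S A A' R κ ν)
    (hmix : ∀ k, processBetaMix P (fun t ω => (S t ω, A t ω, R t ω)) k ≤ ρ ^ k) :
    0 < -k0 * Real.log ρ - 1 ∧
    ∀ {N T K : ℕ}, 0 < N → 0 < T → 0 < K → (K : ℝ) = k0 * Real.log ((N : ℝ) * T) →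
      ∀ {Ω' : Type*} [MeasurableSpace Ω'] {P' : Measure Ω'} {X : Fin N → Ω' → Trajectory p 𝒮},
        (∀ n, Measurable (X n)) →
        P'.map (fun ω n => X n ω) =
          Measure.pi (fun _ => P.map fun ω t => (S t ω, A t ω, A' t ω, R t ω)) →
      ∀ {k : Fin K} {W : (Fin N × {t : Fin T // (t : ℕ) % K = k} → Transition p 𝒮) → Fin p → ℝ},
        Measurable W → HasFlipSign W →
        ∫ ω, mFDP α H (knockoffSelect α (W fun i => (X i.1 ω).transition i.2.1)) ∂P' ≤
          α + ρ⁻¹ * (K : ℝ)⁻¹ * ((N : ℝ) * T) ^ (-(-k0 * Real.log ρ - 1)) := by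
  refine ⟨neg_mul_log_sub_one_pos hρ0 hρ1 hk0, ?_⟩
  intro N T K hN hT hK hKlog Ω' _ P' X hX hlaw k W hW hflip
  calc _ ≤ _ := h.integral_mFDP_fold_le hα hH hX hlaw hW hflip
    _ ≤ α + N * (((T - 1) / K : ℕ) * ρ ^ (K - 1)) := by gcongr; exact hmix _
    _ ≤ _ := add_le_add_right (mul_pow_sub_one_le_rpow hρ0 hN hT hK hKlog) α

/-- **Statement 10** (Theorem 1: mFDR control of knockoff-sampling in online RL).
The environment process `{(S_t, A_t, R_t)}` is stationary and exponentially β-mixing with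
rate `ρ`; at each step a knockoff action `Ã_t` is resampled conditionally on `S_t`,
independently of everything else, so that given `S_t` the `2p` coordinates of `(A_t, Ã_t)`
are mutually independent with matching coordinatewise conditional laws `κ_{t,j}(S_t, ·)`;
and `Y_t = (R_t, S_{t+1})` depends on `(S_t, A_t, Ã_t)` only through `S_t` and the nonnull
coordinates `A_{t,G}` (`H0 = Gᶜ` is the null set).  The buffer consists of `N` i.i.d.
trajectories of length `T` of this process, split into `K = k0 · log(NT)` folds by
`t mod K` (with `k0 > −1/log ρ`).  For any fold `k` and any measurable knockoff statistic
`W` on the fold satisfying the flip-sign property, the knockoff selection at level `α`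
satisfies `mFDR ≤ α + C · K⁻¹ (NT)^{−c}` with `c = −k0 log ρ − 1 > 0` and a constant `C`
independent of `N` and `T`. -/
theorem knockoff_sampling_mFDR_control
    {p : ℕ} {Ω 𝒮 : Type*} [MeasurableSpace Ω]
    [MeasurableSpace 𝒮] [StandardBorelSpace 𝒮] [Nonempty 𝒮]
    (P : Measure Ω) [IsProbabilityMeasure P]
    (H0 G : Finset (Fin p)) (hG : H0 = Gᶜ)
    (α ρ k0 : ℝ) (hα : 0 < α) (hα1 : α < 1) (hρ0 : 0 < ρ) (hρ1 : ρ < 1)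
    (hk0 : k0 > -1 / Real.log ρ)
    -- the generic environment process (S_t, A_t, R_t) and resampled knockoffs Ã_t
    (S : ℕ → Ω → 𝒮) (A : ℕ → Ω → Fin p → ℝ) (R : ℕ → Ω → ℝ)
    (A' : ℕ → Ω → Fin p → ℝ)
    (hS : ∀ t, Measurable (S t)) (hA : ∀ t, Measurable (A t))
    (hR : ∀ t, Measurable (R t)) (hA' : ∀ t, Measurable (A' t))
    -- stationarity of {(S_t, A_t, R_t)}
    (hstat : ∀ u : ℕ,
      P.map (fun ω => fun t : ℕ => (S (t + u) ω, A (t + u) ω, R (t + u) ω))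
        = P.map (fun ω => fun t : ℕ => (S t ω, A t ω, R t ω)))
    -- exponential β-mixing with rate ρ: β(k) ≤ ρ^k
    (hmix : ∀ k : ℕ,
      processBetaMix P (fun t ω => (S t ω, A t ω, R t ω)) k ≤ ρ ^ k)
    -- (i): conditionally on S_t, the 2p coordinates of (A_t, Ã_t) are mutually
    -- independent, the j-th coordinates of A_t and Ã_t both with law κ_{t,j}(S_t, ·)
    (κ : ℕ → Fin p → Kernel 𝒮 ℝ) (hκ : ∀ t j, IsMarkovKernel (κ t j))
    (hcond : ∀ t : ℕ, ∀ᵐ s ∂(P.map (S t)),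
      condDistrib (fun ω => (A t ω, A' t ω)) (S t) P s
        = (Measure.pi fun j => κ t j s).prod (Measure.pi fun j => κ t j s))
    -- (i): the knockoff Ã_t is drawn conditionally on S_t, independently of everything
    -- else (the whole base process and all other knockoffs)
    (hindep : ∀ t : ℕ, ∀ᵐ x ∂(P.map fun ω =>
        (S t ω, (fun t' : ℕ => (S t' ω, A t' ω, R t' ω),
          fun t' : {t' : ℕ // t' ≠ t} => A' t'.1 ω))),
      condDistrib (A' t)
        (fun ω => (S t ω, (fun t' : ℕ => (S t' ω, A t' ω, R t' ω),
          fun t' : {t' : ℕ // t' ≠ t} => A' t'.1 ω))) P x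
        = Measure.pi fun j => κ t j x.1)
    -- (ii): Y_t = (R_t, S_{t+1}) depends on (S_t, A_t, Ã_t) only through S_t and A_{t,G}
    (ν : Kernel (𝒮 × ({j : Fin p // j ∈ G} → ℝ)) (ℝ × 𝒮)) (hν : IsMarkovKernel ν)
    (hY : ∀ t : ℕ, ∀ᵐ x ∂(P.map fun ω => (S t ω, A t ω, A' t ω)),
      condDistrib (fun ω => (R t ω, S (t + 1) ω)) (fun ω => (S t ω, A t ω, A' t ω)) P x
        = ν (x.1, fun j : {j : Fin p // j ∈ G} => x.2.1 j.1)) :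
    0 < -k0 * Real.log ρ - 1 ∧
    ∃ C : ℝ, ∀ N T K : ℕ, 0 < N → 0 < T → 0 < K →
      (K : ℝ) = k0 * Real.log ((N : ℝ) * (T : ℝ)) →
      -- the buffer: N i.i.d. trajectories, each distributed as the generic process
      ∀ (tS : Fin N → ℕ → Ω → 𝒮) (tA tA' : Fin N → ℕ → Ω → Fin p → ℝ)
        (tR : Fin N → ℕ → Ω → ℝ),
        (∀ n t, Measurable (tS n t)) → (∀ n t, Measurable (tA n t)) →
        (∀ n t, Measurable (tA' n t)) → (∀ n t, Measurable (tR n t)) →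
        (P.map (fun ω => fun n : Fin N => fun t : ℕ =>
            (tS n t ω, tA n t ω, tA' n t ω, tR n t ω))
          = Measure.pi (fun _ : Fin N => P.map (fun ω => fun t : ℕ =>
              (S t ω, A t ω, A' t ω, R t ω)))) →
      -- fold k: all transition tuples (A_t, Ã_t, S_t, (R_t, S_{t+1})) with t ≡ k (mod K)
      ∀ (k : Fin K)
        (W : ((Fin N × {t : Fin T // (t : ℕ) % K = (k : ℕ)}) →
          (Fin p → ℝ) × (Fin p → ℝ) × 𝒮 × (ℝ × 𝒮)) → Fin p → ℝ),
        Measurable W →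
        -- flip-sign property of the knockoff statistic W on the fold data
        (∀ (E : Finset (Fin p))
          (d : (Fin N × {t : Fin T // (t : ℕ) % K = (k : ℕ)}) →
            (Fin p → ℝ) × (Fin p → ℝ) × 𝒮 × (ℝ × 𝒮)) (j : Fin p),
          W (fun i => ((swapPair E (d i).1 (d i).2.1).1, (swapPair E (d i).1 (d i).2.1).2,
              (d i).2.2.1, (d i).2.2.2)) j
            = if j ∈ E then - W d j else W d j) →
        ∫ ω, (fun Gh : Finset (Fin p) =>
            ((Gh ∩ H0).card : ℝ) / (1 / α + (Gh.card : ℝ)))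
            (knockoffSelect α (W (fun i =>
              (tA i.1 (i.2.1 : ℕ) ω, tA' i.1 (i.2.1 : ℕ) ω, tS i.1 (i.2.1 : ℕ) ω,
                (tR i.1 (i.2.1 : ℕ) ω, tS i.1 ((i.2.1 : ℕ) + 1) ω))))) ∂P
          ≤ α + C * (K : ℝ)⁻¹ * ((N : ℝ) * (T : ℝ)) ^ (-(-k0 * Real.log ρ - 1)) := by
  subst hG
  have hproc : IsKnockoffProcess P G S A A' R κ fun _ => ν :=
    { measurable_state := hS
      measurable_action := hA
      measurable_knockoff := hA'
      measurable_reward := hR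
      action_knockoff := fun t =>
        hasCondDistrib_of_condDistrib_ae_eq (by fun_prop) (by fun_prop) (by
          filter_upwards [hcond t] with s hs
          rw [hs, Kernel.prod_apply, piKernel_apply])
      knockoff_resampled := fun t =>
        hasCondDistrib_of_condDistrib_ae_eq (by fun_prop) (by fun_prop) (hindep t)
      outcome := fun t => hasCondDistrib_of_condDistrib_ae_eq (by fun_prop) (by fun_prop) (hY t) }
  obtain ⟨hc, hbound⟩ := knockoff_sampling_mFDR_control_general disjoint_compl_left hα hρ0 hρ1 hk0
    hproc hmix
  refine ⟨hc, ρ⁻¹, fun N T K hN hT hK hKlog tS tA tA' tR htS htA htA' htR hlaw k W hW hflip => ?_⟩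
  exact hbound hN hT hK hKlog (X := fun n ω t => (tS n t ω, tA n t ω, tA' n t ω, tR n t ω))
    (fun n => by fun_prop) hlaw hW hflip
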